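/- arXiv:2503.03905 — 8 statements merged into one kernel-verified Lean document; each statement's English description precedes it below -/
import Mathlib

section
/- Let t ≤ m be positive integers, F = GaloisField 2 m, T = GaloisField 2 t. Let ⋆ be a left pre-quasifield operation on F, let d : F → F → F be a right-division map for ⋆, and let γ : F → T be balanced. Define f₁ : F × F → T by f₁(x,y) = γ(d(x,y)). Then the distance of f₁ to affine functions satisfies dA(f₁) = (2^t − 1) · 2^(m−t) · (2^m − 1) (i.e. dA(f₁) = (1 − 2^(−t))(2^(2m) − 2^m)). -/
/-- The distance of `f : V → W` to the set of affine maps: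
the minimum Hamming distance `|{x | f x ≠ A x}|` over affine maps `A x = L x + c`. -/
noncomputable def dA {V W : Type*} [AddCommGroup V] [AddCommGroup W]
    [Module (ZMod 2) V] [Module (ZMod 2) W] (f : V → W) : ℕ :=
  sInf { d : ℕ | ∃ (L : V →ₗ[ZMod 2] W) (c : W), d = {x | f x ≠ L x + c}.ncard }

/-!
The lines `y = 0` and `x = a ⋆ y`, `a ∈ F`, form a spread of `F × F`: they cover it, and any two of
them are complementary. The function `f (x, y) = γ (d x y)` is constant on each line away from the
origin. For a nontrivial character `ψ` of `T` and an affine `A` with linear part `L`, the sum of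
`ψ (f v - A v)` is therefore a combination, with coefficients of modulus one, of the sums of the
character `χ = ψ ∘ (-L)` over the lines, the contributions of the origin cancelling because `γ` is
balanced. Two lines generate `F × F`, so a nontrivial `χ` is trivial on at most one line, which
bounds the sum by `|F|`; for `χ = 0` balancedness gives the same bound. Summing over `ψ` bounds the
number of agreements of `f` with `A`, and the constant map `f 0` attains the bound.
-/

open Finset

section FiberSums

variable {A T : Type*} [Fintype A] {γ : A → T} {k : ℕ}

lemma sum_comp_of_ncard_fiber_eq [Fintype T] {M : Type*} [AddCommMonoid M]
    (hγ : ∀ b, {a | γ a = b}.ncard = k) (g : T → M) : ∑ a, g (γ a) = k • ∑ b, g b := by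
  classical
  have hcard (b : T) : #{a | γ a = b} = k := by
    rw [← hγ b, ← Set.ncard_coe_finset, coe_filter_univ]
  rw [← sum_fiberwise' univ γ g, smul_sum]
  exact sum_congr rfl fun b _ => by rw [sum_const, hcard]

lemma card_eq_card_mul_of_ncard_fiber_eq [Fintype T] (hγ : ∀ b, {a | γ a = b}.ncard = k) :
    Fintype.card A = Fintype.card T * k := by
  simpa [mul_comm] using sum_comp_of_ncard_fiber_eq hγ fun _ => (1 : ℕ)

lemma sum_addChar_comp_eq_zero [AddCommGroup T] [Finite T] {R : Type*} [CommRing R] [IsDomain R]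
    [CharZero R] (hγ : ∀ b, {a | γ a = b}.ncard = k) {ψ : AddChar T R} (hψ : ψ ≠ 0) :
    ∑ a, ψ (γ a) = 0 := by
  have := Fintype.ofFinite T
  rw [sum_comp_of_ncard_fiber_eq hγ, AddChar.sum_eq_zero_iff_ne_zero.mpr hψ, smul_zero]

end FiberSums

section Characters

open scoped Classical in
lemma sum_addChar_addSubgroup {V : Type*} [AddCommGroup V] [Fintype V] {R : Type*} [CommRing R]
    [IsDomain R] [CharZero R] (H : AddSubgroup V) (χ : AddChar V R) :
    ∑ v with v ∈ H, χ v = if ∀ v ∈ H, χ v = 1 then (Nat.card H : R) else 0 := by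
  have htriv : χ.compAddMonoidHom H.subtype = 0 ↔ ∀ v ∈ H, χ v = 1 := by
    simp [DFunLike.ext_iff]
  rw [sum_subtype (p := (· ∈ H)) _ (by simp), Nat.card_eq_fintype_card]
  exact (AddChar.sum_eq_ite (χ.compAddMonoidHom H.subtype)).trans (if_congr htriv rfl rfl)

variable {V T : Type*} [Fintype V] [AddCommGroup T] [Fintype T]

lemma sum_addChar_sum_comp [DecidableEq T] (g : V → T) :
    ∑ ψ : AddChar T ℂ, ∑ v, ψ (g v) = Fintype.card T * #{v | g v = 0} := by
  rw [sum_comm]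
  simp only [AddChar.sum_apply_eq_ite]
  rw [← sum_filter, sum_const, nsmul_eq_mul, mul_comm]

lemma card_mul_card_zeros_le [DecidableEq T] {g : V → T} {B : ℝ}
    (hB : ∀ ψ : AddChar T ℂ, ψ ≠ 0 → ‖∑ v, ψ (g v)‖ ≤ B) :
    (Fintype.card T : ℝ) * #{v | g v = 0} ≤ Fintype.card V + (Fintype.card T - 1) * B := by
  classical
  calc (Fintype.card T : ℝ) * #{v | g v = 0}
      = ‖∑ ψ : AddChar T ℂ, ∑ v, ψ (g v)‖ := by
        rw [sum_addChar_sum_comp, norm_mul, Complex.norm_natCast, Complex.norm_natCast]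
    _ ≤ ‖∑ v, (0 : AddChar T ℂ) (g v)‖ + ∑ _ψ ∈ univ.erase (0 : AddChar T ℂ), B := by
        rw [← add_sum_erase _ _ (mem_univ (0 : AddChar T ℂ))]
        exact (norm_add_le _ _).trans <| by
          gcongr
          exact norm_sum_le_of_le _ fun _ hψ => hB _ (ne_of_mem_erase hψ)
    _ = Fintype.card V + (Fintype.card T - 1) * B := by
        simp [card_erase_of_mem, Nat.cast_sub Fintype.card_pos]

lemma le_card_mul_ncard_ne_zero {g : V → T} {B : ℝ}
    (hB : ∀ ψ : AddChar T ℂ, ψ ≠ 0 → ‖∑ v, ψ (g v)‖ ≤ B) :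
    ((Fintype.card T : ℝ) - 1) * (Fintype.card V - B) ≤
      Fintype.card T * {v | g v ≠ 0}.ncard := by
  classical
  have hsplit : (#{v | g v = 0} : ℝ) + {v | g v ≠ 0}.ncard = Fintype.card V := by
    rw [← coe_filter_univ, Set.ncard_coe_finset]
    exact_mod_cast card_filter_add_card_filter_not (s := univ) fun v => g v = 0
  linear_combination card_mul_card_zeros_le hB + (-Fintype.card T : ℝ) * hsplit

end Characters

section Distance

variable {V W : Type*} [AddCommGroup V] [AddCommGroup W] [Module (ZMod 2) V] [Module (ZMod 2) W]
  {f : V → W}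

lemma dA_le_ncard_ne_const (f : V → W) (c : W) : dA f ≤ {v | f v ≠ c}.ncard :=
  Nat.sInf_le ⟨0, c, by simp⟩

lemma le_dA {n : ℕ} (h : ∀ (L : V →ₗ[ZMod 2] W) (c : W), n ≤ {v | f v ≠ L v + c}.ncard) :
    n ≤ dA f :=
  le_csInf ⟨_, 0, 0, rfl⟩ <| by
    rintro _ ⟨L, c, rfl⟩
    exact h L c

end Distance

lemma isCompl_of_disjoint_of_card_mul_card {V : Type*} [AddCommGroup V] [Finite V]
    {H K : AddSubgroup V} (hdisj : Disjoint H K) (hcard : Nat.card H * Nat.card K = Nat.card V) :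
    IsCompl H K := by
  have hbij : Function.Bijective fun p : H × K => (p.1 + p.2 : V) :=
    (Nat.bijective_iff_injective_and_card _).mpr
      ⟨AddSubgroup.add_injective_of_disjoint hdisj, (Nat.card_prod H K).trans hcard⟩
  refine ⟨hdisj, codisjoint_iff.mpr <| eq_top_iff.mpr fun v _ => ?_⟩
  obtain ⟨⟨u, w⟩, rfl⟩ := hbij.surjective v
  exact AddSubgroup.add_mem_sup u.2 w.2

/-- A spread of order `q`: a family of subgroups of order `q` which covers the group and whose
members are pairwise complementary. -/
structure IsSpread {ι V : Type*} [AddCommGroup V] (U : ι → AddSubgroup V) (q : ℕ) : Prop where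
  card_eq (i : ι) : Nat.card (U i) = q
  isCompl : Pairwise fun i j => IsCompl (U i) (U j)
  exists_mem (v : V) : ∃ i, v ∈ U i

/-- A function of Dillon type: it is constant on the nonzero elements of each member of a spread,
with value `γ i` on the member `some i`, and with value `f 0` on the distinguished member `none`. -/
def IsDillonType {ι V T : Type*} [AddCommGroup V] (U : Option ι → AddSubgroup V) (γ : ι → T)
    (f : V → T) : Prop :=
  ∀ i, ∀ v ∈ U i, v ≠ 0 → f v = i.elim (f 0) γ

namespace IsSpread

section Sums

variable {ι V : Type*} [AddCommGroup V] {U : ι → AddSubgroup V} {q : ℕ}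

lemma addChar_apply_eq_one (hU : IsSpread U q) {M : Type*} [Monoid M] {χ : AddChar V M}
    {i j : ι} (hij : i ≠ j) (hi : ∀ v ∈ U i, χ v = 1) (hj : ∀ v ∈ U j, χ v = 1) (v : V) :
    χ v = 1 := by
  obtain ⟨u, hu, w, hw, rfl⟩ : ∃ u ∈ U i, ∃ w ∈ U j, u + w = v :=
    AddSubgroup.mem_sup.mp ((hU.isCompl hij).sup_eq_top ▸ AddSubgroup.mem_top v)
  rw [AddChar.map_add_eq_mul, hi u hu, hj w hw, one_mul]

variable [Fintype ι] [Fintype V]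

open scoped Classical in
lemma sum_eq_add_sum_erase (hU : IsSpread U q) {M : Type*} [AddCommMonoid M] (h : V → M) :
    ∑ v, h v = h 0 + ∑ i, ∑ v ∈ ({v | v ∈ U i} : Finset V).erase 0, h v := by
  have hcover : univ.erase 0 = univ.biUnion fun i => ({v | v ∈ U i} : Finset V).erase 0 := by
    ext v
    simpa using fun _ => hU.exists_mem v
  have hdisj : Set.PairwiseDisjoint ((univ : Finset ι) : Set ι)
      fun i => ({v | v ∈ U i} : Finset V).erase 0 := by
    intro i _ j _ hij
    refine disjoint_left.mpr fun v hi hj => ?_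
    simp only [mem_erase, mem_filter_univ] at hi hj
    exact hi.1 (AddSubgroup.disjoint_def.mp (hU.isCompl hij).disjoint hi.2 hj.2)
  rw [← add_sum_erase _ _ (mem_univ 0), hcover, sum_biUnion hdisj]

lemma sum_eq_of_const (hU : IsSpread U q) {M : Type*} [AddCommMonoid M] {h : V → M} {e : ι → M}
    (he : ∀ i, ∀ v ∈ U i, v ≠ 0 → h v = e i) : ∑ v, h v = h 0 + (q - 1) • ∑ i, e i := by
  classical
  rw [hU.sum_eq_add_sum_erase, smul_sum]
  congr 1
  refine sum_congr rfl fun i _ => ?_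
  have hcard : #({v | v ∈ U i} : Finset V) = q := by
    rw [← hU.card_eq i, Nat.card_eq_fintype_card, Fintype.card_subtype]
  rw [sum_congr rfl fun v hv => he i v (by simp_all) (ne_of_mem_erase hv), sum_const,
    card_erase_of_mem (by simp), hcard]

lemma card_eq_one_add (hU : IsSpread U q) :
    Fintype.card V = 1 + (q - 1) * Fintype.card ι := by
  simpa using hU.sum_eq_of_const (M := ℕ) (h := fun _ => 1) (e := fun _ => 1) fun _ _ _ _ => rfl

open scoped Classical in
lemma sum_mul_addChar_eq (hU : IsSpread U q) {R : Type*} [CommSemiring R] {g : V → R}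
    {e : ι → R} (he : ∀ i, ∀ v ∈ U i, v ≠ 0 → g v = e i) (he0 : ∑ i, e i = g 0)
    (χ : AddChar V R) :
    ∑ v, g v * χ v = ∑ i, e i * ∑ v with v ∈ U i, χ v := by
  have hline (i : ι) : e i * ∑ v with v ∈ U i, χ v =
      e i + ∑ v ∈ ({v | v ∈ U i} : Finset V).erase 0, g v * χ v := by
    rw [← add_sum_erase _ _ (show (0 : V) ∈ ({v | v ∈ U i} : Finset V) by simp), mul_add,
      AddChar.map_zero_eq_one, mul_one, mul_sum]
    congr 1
    exact sum_congr rfl fun v hv => by rw [he i v (by simp_all) (ne_of_mem_erase hv)]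
  simp only [hline]
  rw [hU.sum_eq_add_sum_erase, sum_add_distrib, he0, AddChar.map_zero_eq_one, mul_one]

open scoped Classical in
lemma norm_sum_filter_trivial_le_one (hU : IsSpread U q) {E M : Type*} [SeminormedAddCommGroup E]
    [Monoid M] {e : ι → E} (he : ∀ i, ‖e i‖ ≤ 1) (hsum : ‖∑ i, e i‖ ≤ 1) (χ : AddChar V M) :
    ‖∑ i with ∀ v ∈ U i, χ v = 1, e i‖ ≤ 1 := by
  by_cases hχ : ∀ v, χ v = 1
  · simpa [hχ] using hsum
  · have hcard : #{i | ∀ v ∈ U i, χ v = 1} ≤ 1 := card_le_one.mpr fun i hi j hj => by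
      by_contra hij
      exact hχ (hU.addChar_apply_eq_one hij (mem_filter_univ i |>.mp hi)
        (mem_filter_univ j |>.mp hj))
    calc ‖∑ i with ∀ v ∈ U i, χ v = 1, e i‖
        ≤ ∑ i with ∀ v ∈ U i, χ v = 1, (1 : ℝ) := norm_sum_le_of_le _ fun i _ => he i
      _ ≤ 1 := by simpa using hcard

lemma norm_sum_mul_addChar_le (hU : IsSpread U q) {g : V → ℂ} {e : ι → ℂ}
    (he : ∀ i, ∀ v ∈ U i, v ≠ 0 → g v = e i) (he0 : ∑ i, e i = g 0) (hnorm : ∀ i, ‖e i‖ ≤ 1)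
    (hnorm0 : ‖g 0‖ ≤ 1) (χ : AddChar V ℂ) : ‖∑ v, g v * χ v‖ ≤ q := by
  classical
  have hfactor : ∑ v, g v * χ v = (∑ i with ∀ v ∈ U i, χ v = 1, e i) * q := by
    simp only [hU.sum_mul_addChar_eq he he0, sum_addChar_addSubgroup, hU.card_eq, mul_ite,
      mul_zero]
    rw [← sum_filter, sum_mul]
  rw [hfactor, norm_mul, Complex.norm_natCast]
  exact mul_le_of_le_one_left (Nat.cast_nonneg q)
    (hU.norm_sum_filter_trivial_le_one hnorm (he0 ▸ hnorm0) χ)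

end Sums

section Distance

variable {ι V T : Type*} [Finite ι] [AddCommGroup V] [Finite T]
  {U : Option ι → AddSubgroup V} {q k : ℕ} {f : V → T} {γ : ι → T}

lemma ncard_ne_apply_zero [Finite V] (hU : IsSpread U q) (hf : IsDillonType U γ f)
    (hγ : ∀ b, {a | γ a = b}.ncard = k) :
    {v | f v ≠ f 0}.ncard = (Nat.card T - 1) * k * (q - 1) := by
  classical
  have := Fintype.ofFinite ι
  have := Fintype.ofFinite V
  have := Fintype.ofFinite T
  rw [Nat.card_eq_fintype_card]
  let δ (b : T) : ℕ := if b = f 0 then 0 else 1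
  have hδ0 : δ (f 0) = 0 := if_pos rfl
  have hδ : ∑ b, δ b = Fintype.card T - 1 := by
    simp only [δ, sum_ite, sum_const_zero, sum_const, smul_eq_mul, mul_one, zero_add]
    rw [filter_ne', card_erase_of_mem (mem_univ _), card_univ]
  calc {v | f v ≠ f 0}.ncard
      = ∑ v, δ (f v) := by
        rw [← coe_filter_univ, Set.ncard_coe_finset, card_filter]
        simp only [ne_eq, ite_not, δ]
    _ = δ (f 0) + (q - 1) • ∑ i : Option ι, δ (i.elim (f 0) γ) :=
        hU.sum_eq_of_const fun i v hv hv0 => congrArg δ (hf i v hv hv0)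
    _ = (q - 1) • ∑ i, δ (γ i) := by
        simp only [Fintype.sum_option, Option.elim_none, Option.elim_some, hδ0, zero_add]
    _ = (Fintype.card T - 1) * k * (q - 1) := by
        rw [sum_comp_of_ncard_fiber_eq hγ, hδ, smul_eq_mul, smul_eq_mul]
        ring

variable [AddCommGroup T]

lemma norm_sum_addChar_sub_affine_le [Fintype V] (hU : IsSpread U q) (hf : IsDillonType U γ f)
    (hγ : ∀ b, {a | γ a = b}.ncard = k) (L : V →+ T) (c : T) {ψ : AddChar T ℂ}
    (hψ : ψ ≠ 0) :
    ‖∑ v, ψ (f v - (L v + c))‖ ≤ q := by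
  have := Fintype.ofFinite ι
  have hfactor (v : V) :
      ψ (f v - (L v + c)) = ψ (-c) * (ψ (f v) * ψ.compAddMonoidHom (-L) v) := by
    rw [AddChar.compAddMonoidHom_apply, ← AddChar.map_add_eq_mul, ← AddChar.map_add_eq_mul,
      AddMonoidHom.neg_apply]
    congr 1
    abel
  simp only [hfactor]
  rw [← mul_sum, norm_mul, AddChar.norm_apply, one_mul]
  refine hU.norm_sum_mul_addChar_le (g := fun v => ψ (f v)) (e := fun i => ψ (i.elim (f 0) γ))
    (fun i v hv hv0 => congrArg ψ (hf i v hv hv0)) ?_ (fun _ => (ψ.norm_apply _).le)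
    (ψ.norm_apply _).le _
  simp [Fintype.sum_option, sum_addChar_comp_eq_zero hγ hψ]

lemma le_ncard_ne_affine [Finite V] (hU : IsSpread U q) (hf : IsDillonType U γ f)
    (hγ : ∀ b, {a | γ a = b}.ncard = k) (L : V →+ T) (c : T) :
    (Nat.card T - 1) * k * (q - 1) ≤ {v | f v ≠ L v + c}.ncard := by
  have := Fintype.ofFinite ι
  have := Fintype.ofFinite V
  have := Fintype.ofFinite T
  rw [Nat.card_eq_fintype_card]
  have hq : 1 ≤ q := hU.card_eq none ▸ Nat.card_pos
  have hT : 1 ≤ Fintype.card T := Fintype.card_pos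
  have hV : (Fintype.card V : ℝ) = q + (q - 1) * (Fintype.card T * k) := by
    have := hU.card_eq_one_add
    rw [Fintype.card_option, card_eq_card_mul_of_ncard_fiber_eq hγ] at this
    rw [this]
    push_cast [hq]
    ring
  have hsupport := le_card_mul_ncard_ne_zero fun ψ hψ =>
    hU.norm_sum_addChar_sub_affine_le hf hγ L c hψ
  simp only [sub_ne_zero] at hsupport
  have hT0 : (0 : ℝ) < Fintype.card T := by positivity
  rw [← Nat.cast_le (α := ℝ)]
  push_cast [hq, hT]
  refine le_of_mul_le_mul_left ?_ hT0
  rw [hV] at hsupport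
  linear_combination hsupport

theorem dA_eq [Finite V] [Module (ZMod 2) V] [Module (ZMod 2) T] (hU : IsSpread U q)
    (hf : IsDillonType U γ f) (hγ : ∀ b, {a | γ a = b}.ncard = k) :
    dA f = (Nat.card T - 1) * k * (q - 1) :=
  le_antisymm ((dA_le_ncard_ne_const f (f 0)).trans_eq (hU.ncard_ne_apply_zero hf hγ))
    (le_dA fun L c => hU.le_ncard_ne_affine hf hγ L.toAddMonoidHom c)

end Distance

end IsSpread

section Division

variable {F : Type*} [AddCommGroup F]

/-- The lines through the origin of the plane coordinatized by a product `x ⋆ y = mul x y` that is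
additive in `y`: the line `y = 0` at `none`, and the line `x = a ⋆ y` at `some a`. -/
def quasifieldLine (mul : F → F →+ F) : Option F → AddSubgroup (F × F)
  | none => (AddMonoidHom.inl F F).range
  | some a => ((mul a).prod (AddMonoidHom.id F)).range

variable {mul : F → F →+ F}

lemma mem_quasifieldLine_none {p : F × F} : p ∈ quasifieldLine mul none ↔ p.2 = 0 := by
  simp [quasifieldLine, AddMonoidHom.mem_range, Prod.ext_iff, eq_comm]

lemma mem_quasifieldLine_some {a : F} {p : F × F} :
    p ∈ quasifieldLine mul (some a) ↔ p.1 = mul a p.2 := by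
  simp [quasifieldLine, AddMonoidHom.mem_range, Prod.ext_iff, eq_comm]

lemma card_quasifieldLine (mul : F → F →+ F) (i : Option F) :
    Nat.card (quasifieldLine mul i) = Nat.card F := by
  cases i with
  | none => exact Nat.card_range_of_injective (Prod.mk_left_injective 0)
  | some a => exact Nat.card_range_of_injective fun _ _ h => congrArg Prod.snd h

lemma disjoint_quasifieldLine
    (hinj : ∀ y, y ≠ 0 → Function.Injective fun x => mul x y) :
    Pairwise fun i j => Disjoint (quasifieldLine mul i) (quasifieldLine mul j) := by
  have hnone (a : F) : Disjoint (quasifieldLine mul none) (quasifieldLine mul (some a)) := by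
    refine AddSubgroup.disjoint_def.mpr fun {p} hp ha => ?_
    rw [mem_quasifieldLine_none] at hp
    rw [mem_quasifieldLine_some, hp, map_zero] at ha
    exact Prod.ext ha hp
  rintro (_ | a) (_ | b) hab
  · exact absurd rfl hab
  · exact hnone b
  · exact (hnone a).symm
  · refine AddSubgroup.disjoint_def.mpr fun {p} ha hb => ?_
    rw [mem_quasifieldLine_some] at ha hb
    have hy : p.2 = 0 := by
      by_contra hy
      exact hab (congrArg some (hinj p.2 hy (ha.symm.trans hb)))
    exact Prod.ext (by rw [ha, hy, map_zero, Prod.fst_zero]) hy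

theorem isSpread_quasifieldLine [Finite F]
    (hinj : ∀ y, y ≠ 0 → Function.Injective fun x => mul x y) :
    IsSpread (quasifieldLine mul) (Nat.card F) where
  card_eq := card_quasifieldLine mul
  isCompl i j hij := isCompl_of_disjoint_of_card_mul_card
    (disjoint_quasifieldLine hinj hij)
    (by rw [card_quasifieldLine, card_quasifieldLine, Nat.card_prod])
  exists_mem p := by
    by_cases hp : p.2 = 0
    · exact ⟨none, mem_quasifieldLine_none.mpr hp⟩
    · obtain ⟨a, ha⟩ := Finite.surjective_of_injective (hinj p.2 hp) p.1
      exact ⟨some a, mem_quasifieldLine_some.mpr ha.symm⟩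

end Division

theorem dist_to_affine_of_dillon_type_bent_general {F T : Type*} [AddCommGroup F] [AddCommGroup T]
    [Module (ZMod 2) F] [Module (ZMod 2) T] [Finite F] [Finite T]
    (star : F → F → F) (hdist : ∀ x y z, star x (y + z) = star x y + star x z)
    (d : F → F → F) (hd0 : ∀ x, d x 0 = 0) (hdiv : ∀ x y, y ≠ 0 → star (d x y) y = x)
    (γ : F → T) (k : ℕ) (hγ : ∀ b, {a | γ a = b}.ncard = k) :
    dA (fun p : F × F => γ (d p.1 p.2)) = (Nat.card T - 1) * k * (Nat.card F - 1) := by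
  let mul (a : F) : F →+ F := AddMonoidHom.mk' (star a) (hdist a)
  have hinj (y : F) (hy : y ≠ 0) : Function.Injective fun x => mul x y :=
    Finite.injective_iff_surjective.mpr fun x => ⟨d x y, hdiv x y hy⟩
  have hf : IsDillonType (quasifieldLine mul) γ fun p : F × F => γ (d p.1 p.2) := by
    rintro (_ | a) ⟨x, y⟩ hp hp0
    · obtain rfl : y = 0 := mem_quasifieldLine_none.mp hp
      simp only [hd0, Prod.fst_zero, Prod.snd_zero, Option.elim_none]
    · obtain rfl : x = star a y := mem_quasifieldLine_some.mp hp
      have hy : y ≠ 0 := by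
        rintro rfl
        exact hp0 (Prod.ext (map_zero (mul a)) rfl)
      exact congrArg γ (hinj y hy (hdiv _ y hy))
  exact (isSpread_quasifieldLine hinj).dA_eq hf hγ

theorem dist_to_affine_of_dillon_type_bent
    (m t : ℕ) (hm : 0 < m) (ht : 0 < t) (htm : t ≤ m)
    (star : GaloisField 2 m → GaloisField 2 m → GaloisField 2 m)
    (hz1 : ∀ x, star x 0 = 0) (hz2 : ∀ x, star 0 x = 0)
    (hdist : ∀ x y z, star x (y + z) = star x y + star x z)
    (hbij1 : ∀ a, a ≠ 0 → Function.Bijective fun x => star x a)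
    (hbij2 : ∀ a, a ≠ 0 → Function.Bijective fun x => star a x)
    (d : GaloisField 2 m → GaloisField 2 m → GaloisField 2 m)
    (hd0 : ∀ x, d x 0 = 0)
    (hdiv : ∀ x y, y ≠ 0 → star (d x y) y = x)
    (γ : GaloisField 2 m → GaloisField 2 t)
    (hγ : ∀ b, {a | γ a = b}.ncard = 2 ^ (m - t)) :
    dA (fun p : GaloisField 2 m × GaloisField 2 m => γ (d p.1 p.2)) =
      (2 ^ t - 1) * 2 ^ (m - t) * (2 ^ m - 1) := by
  rw [dist_to_affine_of_dillon_type_bent_general star hdist d hd0 hdiv γ _ hγ,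
    GaloisField.card 2 t ht.ne', GaloisField.card 2 m hm.ne']
end

section
/- Let t ≤ m be positive integers, F = GaloisField 2 m, T = GaloisField 2 t. Let ⋆ be a left pre-quasifield operation on F, let τ : F → T be a surjective 𝔽₂-linear map, σ : F → F a bijection, and h : F → T an arbitrary function. Define f₂ : F × F → T by f₂(x,y) = τ(σ(y) ⋆ x) + h(y). Then the distance of f₂ to affine functions satisfies dA(f₂) = (2^t − 1) · 2^(m−t) · (2^m − 1) (i.e. dA(f₂) = (1 − 2^(−t))(2^(2m) − 2^m)). -/
/-!
Put `ψ y = τ (σ y ⋆ ·)`, a family of additive maps. On a line `y = const`, the agreement set of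
`ψ y x + h y` with an affine map of linear part `L` is a fibre of the additive map
`ψ y - L (·, 0)`, hence no larger than its kernel. Counting the points of these kernels by `x`
instead of `y`, each `x ≠ 0` contributes a fibre of the balanced map `y ↦ ψ y x`, and `x = 0`
contributes every `y`, so the resulting bound does not depend on `L`. For any fixed `y₀`, the affine
map `(x, y) ↦ ψ y₀ x + h y₀` attains it: bijectivity of the right multiplications makes a difference
of two distinct left multiplications invertible, so `ψ y - ψ y₀` is balanced for every `y ≠ y₀`.
-/

open Function Module

/-- A balanced map: each fibre has exactly `k` elements. Recording `k`, instead of only requiring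
the fibres to be equinumerous, lets the counts below be stated without division. -/
def HasFiberCard {α β : Type*} (f : α → β) (k : ℕ) : Prop :=
  ∀ b, {a | f a = b}.ncard = k

lemma HasFiberCard.comp_bijective {α β γ : Type*} {f : β → γ} {k : ℕ} (hf : HasFiberCard f k)
    {e : α → β} (he : Bijective e) : HasFiberCard (f ∘ e) k := fun c =>
  (Set.ncard_preimage_of_injective_subset_range he.injective
    (by simp [he.surjective.range_eq])).trans (hf c)

lemma hasFiberCard_of_surjective {K V W : Type*} [DivisionRing K] [AddCommGroup V] [Module K V]
    [Module.Finite K V] [AddCommGroup W] [Module K W] (τ : V →ₗ[K] W) (hτ : Surjective τ) :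
    HasFiberCard τ (Nat.card K ^ (finrank K V - finrank K W)) := fun w => by
  have hdim : finrank K τ.ker = finrank K V - finrank K W := by
    rw [← τ.finrank_range_add_finrank_ker, LinearMap.range_eq_top.mpr hτ, finrank_top,
      Nat.add_sub_cancel_left]
  rw [← hdim, ← natCard_eq_pow_finrank]
  exact Nat.card_congr (τ.toAddMonoidHom.fiberEquivKerOfSurjective hτ w)

lemma ncard_fiber_le_ncard_ker {G H : Type*} [AddGroup G] [AddGroup H] (φ : G →+ H) (b : H) :
    {x | φ x = b}.ncard ≤ {x | φ x = 0}.ncard := by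
  by_cases hb : ∃ a, φ a = b
  · obtain ⟨a, rfl⟩ := hb
    exact (Set.ncard_congr' (φ.fiberEquivKer a)).le
  · have hempty : {x | φ x = b} = ∅ := Set.eq_empty_of_forall_notMem fun x hx => hb ⟨x, hx⟩
    simp [hempty]

section PairCounting

variable {α β : Type*}

lemma ncard_setOf_prod_eq_sum_fst [Fintype α] [Finite β] (r : α → β → Prop) :
    {p : α × β | r p.1 p.2}.ncard = ∑ a, {b | r a b}.ncard :=
  (Nat.card_congr (Equiv.subtypeProdEquivSigmaSubtype r)).trans Nat.card_sigma

lemma ncard_setOf_prod_eq_sum_snd [Finite α] [Fintype β] (r : α → β → Prop) :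
    {p : α × β | r p.1 p.2}.ncard = ∑ b, {a | r a b}.ncard :=
  (Set.ncard_congr' ((Equiv.prodComm α β).subtypeEquiv fun _ => Iff.rfl)).trans
    (ncard_setOf_prod_eq_sum_fst fun b a => r a b)

lemma sum_eq_add_card_sub_one_mul [Fintype α] {u : α → ℕ} {k : ℕ} (a : α) (hu : ∀ x ≠ a, u x = k) :
    ∑ x, u x = u a + (Nat.card α - 1) * k := by
  classical
  rw [← Finset.add_sum_erase _ _ (Finset.mem_univ a),
    Finset.sum_congr rfl fun x hx => hu x (Finset.ne_of_mem_erase hx)]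
  simp

end PairCounting

section AdditiveFamily

variable {U V W : Type*} [Finite U] [AddCommGroup V] [Finite V] [AddCommGroup W] {k : ℕ}
  {ψ : U → V →+ W}

lemma ncard_agree_le_of_balanced_eval (hψ : ∀ x ≠ 0, HasFiberCard (fun y => ψ y x) k)
    (h g : U → W) (l : V →+ W) :
    {p : V × U | ψ p.2 p.1 + h p.2 = l p.1 + g p.2}.ncard ≤
      Nat.card U + (Nat.card V - 1) * k := by
  cases nonempty_fintype U
  cases nonempty_fintype V
  calc {p : V × U | ψ p.2 p.1 + h p.2 = l p.1 + g p.2}.ncard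
      = ∑ y, {x | (ψ y - l) x = g y - h y}.ncard := by
        rw [ncard_setOf_prod_eq_sum_snd fun x y => ψ y x + h y = l x + g y]
        simp only [AddMonoidHom.sub_apply, sub_eq_sub_iff_add_eq_add, add_comm (g _)]
    _ ≤ ∑ y, {x | (ψ y - l) x = 0}.ncard :=
        Finset.sum_le_sum fun y _ => ncard_fiber_le_ncard_ker (ψ y - l) _
    _ = ∑ x, {y | ψ y x = l x}.ncard := by
        simp only [AddMonoidHom.sub_apply, sub_eq_zero]
        rw [← ncard_setOf_prod_eq_sum_snd fun x y => ψ y x = l x,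
          ncard_setOf_prod_eq_sum_fst fun x y => ψ y x = l x]
    _ = Nat.card U + (Nat.card V - 1) * k := by
        rw [sum_eq_add_card_sub_one_mul 0 fun x hx => hψ x hx (l x)]
        simp

lemma ncard_agree_eq_of_balanced_sub {y₀ : U} (hψ : ∀ y ≠ y₀, HasFiberCard (ψ y - ψ y₀) k)
    (h : U → W) :
    {p : V × U | ψ p.2 p.1 + h p.2 = ψ y₀ p.1 + h y₀}.ncard =
      Nat.card V + (Nat.card U - 1) * k := by
  cases nonempty_fintype U
  cases nonempty_fintype V
  have hfiber : ∀ y ≠ y₀, {x | ψ y x + h y = ψ y₀ x + h y₀}.ncard = k := fun y hy => by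
    rw [← hψ y hy (h y₀ - h y)]
    simp only [AddMonoidHom.sub_apply, sub_eq_sub_iff_add_eq_add, add_comm (h y₀)]
  rw [ncard_setOf_prod_eq_sum_snd fun x y => ψ y x + h y = ψ y₀ x + h y₀,
    sum_eq_add_card_sub_one_mul y₀ hfiber]
  simp

end AdditiveFamily

lemma bijective_sub_of_injective_eval {U V : Type*} [AddCommGroup V] [Finite V]
    {φ : U → V →+ V} (hφ : ∀ x ≠ 0, Injective fun y => φ y x) {y y₀ : U} (hy : y ≠ y₀) :
    Bijective (φ y - φ y₀) := by
  refine Finite.injective_iff_bijective.mp ((injective_iff_map_eq_zero _).mpr fun x hx => ?_)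
  by_contra hx₀
  exact hy (hφ x hx₀ (sub_eq_zero.mp hx))

lemma dA_eq_card_sub {V W : Type*} [AddCommGroup V] [AddCommGroup W] [Module (ZMod 2) V]
    [Module (ZMod 2) W] [Finite V] {f : V → W} {M : ℕ}
    (hM : IsGreatest {n | ∃ (L : V →ₗ[ZMod 2] W) (c : W), n = {x | f x = L x + c}.ncard} M) :
    dA f = Nat.card V - M := by
  have hcompl (L : V →ₗ[ZMod 2] W) (c : W) :
      {x | f x ≠ L x + c}.ncard = Nat.card V - {x | f x = L x + c}.ncard :=
    Set.ncard_compl _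
  obtain ⟨⟨L₀, c₀, hM₀⟩, hle⟩ := hM
  refine IsLeast.csInf_eq ⟨⟨L₀, c₀, by rw [hcompl, hM₀]⟩, ?_⟩
  rintro _ ⟨L, c, rfl⟩
  rw [hcompl]
  exact Nat.sub_le_sub_left (hle ⟨L, c, rfl⟩) _

lemma dA_of_balanced_family {V W : Type*} [AddCommGroup V] [AddCommGroup W] [Module (ZMod 2) V]
    [Module (ZMod 2) W] [Finite V] {k : ℕ} {ψ : V → V →+ W} {y₀ : V}
    (heval : ∀ x ≠ 0, HasFiberCard (fun y => ψ y x) k)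
    (hsub : ∀ y ≠ y₀, HasFiberCard (ψ y - ψ y₀) k) (h : V → W) :
    dA (fun p : V × V => ψ p.2 p.1 + h p.2) =
      Nat.card V * Nat.card V - (Nat.card V + (Nat.card V - 1) * k) := by
  rw [← Nat.card_prod]
  refine dA_eq_card_sub ⟨?_, ?_⟩
  · exact ⟨(ψ y₀).toZModLinearMap 2 ∘ₗ LinearMap.fst _ _ _, h y₀,
      (ncard_agree_eq_of_balanced_sub hsub h).symm⟩
  · rintro _ ⟨L, c, rfl⟩
    have hL (p : V × V) : L (p.1, 0) + (L (0, p.2) + c) = L p + c := by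
      rw [← add_assoc, ← map_add, Prod.fst_add_snd]
    simpa only [LinearMap.toAddMonoidHom_coe, LinearMap.comp_apply, LinearMap.inl_apply, hL] using
      ncard_agree_le_of_balanced_eval heval h (fun y => L (0, y) + c)
        (L ∘ₗ LinearMap.inl _ _ _).toAddMonoidHom

lemma mul_self_sub_add_sub_one_mul {v n k : ℕ} (hv : v = n * k) :
    v * v - (v + (v - 1) * k) = (n - 1) * k * (v - 1) := by
  rcases v with _ | v
  · simp
  rcases n with _ | n
  · simp at hv
  refine Nat.sub_eq_of_eq_add ?_
  rw [Nat.add_sub_cancel, Nat.add_sub_cancel]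
  linear_combination v * hv

theorem dist_to_affine_of_quasifield_type_bent_general {V W : Type*} [AddCommGroup V]
    [AddCommGroup W] [Module (ZMod 2) V] [Module (ZMod 2) W] [Finite V]
    (φ : V → V →+ V) (hφ : ∀ x ≠ 0, Bijective fun y => φ y x)
    (τ : V →ₗ[ZMod 2] W) (hτ : Surjective τ) (h : V → W) :
    dA (fun p : V × V => τ (φ p.2 p.1) + h p.2) =
      (2 ^ finrank (ZMod 2) W - 1) * 2 ^ (finrank (ZMod 2) V - finrank (ZMod 2) W) *
        (2 ^ finrank (ZMod 2) V - 1) := by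
  set k := 2 ^ (finrank (ZMod 2) V - finrank (ZMod 2) W) with hk
  have hτk : HasFiberCard τ k := by simpa using hasFiberCard_of_surjective τ hτ
  have hV : Nat.card V = 2 ^ finrank (ZMod 2) V := by
    rw [natCard_eq_pow_finrank (K := ZMod 2), Nat.card_zmod]
  have hVW : 2 ^ finrank (ZMod 2) V = 2 ^ finrank (ZMod 2) W * k := by
    rw [hk, ← pow_add, Nat.add_sub_cancel' (LinearMap.finrank_le_finrank_of_surjective hτ)]
  have heval (x : V) (hx : x ≠ 0) : HasFiberCard (fun y => τ (φ y x)) k :=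
    hτk.comp_bijective (hφ x hx)
  have hsub (y : V) (hy : y ≠ 0) :
      HasFiberCard (τ.toAddMonoidHom.comp (φ y) - τ.toAddMonoidHom.comp (φ 0)) k := by
    rw [← AddMonoidHom.comp_sub]
    exact hτk.comp_bijective (bijective_sub_of_injective_eval (fun x hx => (hφ x hx).injective) hy)
  rw [← mul_self_sub_add_sub_one_mul hVW, ← hV]
  exact dA_of_balanced_family heval hsub h

theorem dist_to_affine_of_quasifield_type_bent
    (m t : ℕ) (hm : 0 < m) (ht : 0 < t) (htm : t ≤ m)
    (star : GaloisField 2 m → GaloisField 2 m → GaloisField 2 m)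
    (hz1 : ∀ x, star x 0 = 0) (hz2 : ∀ x, star 0 x = 0)
    (hdist : ∀ x y z, star x (y + z) = star x y + star x z)
    (hbij1 : ∀ a, a ≠ 0 → Function.Bijective fun x => star x a)
    (hbij2 : ∀ a, a ≠ 0 → Function.Bijective fun x => star a x)
    (τ : GaloisField 2 m →ₗ[ZMod 2] GaloisField 2 t) (hτ : Function.Surjective τ)
    (σ : GaloisField 2 m → GaloisField 2 m) (hσ : Function.Bijective σ)
    (h : GaloisField 2 m → GaloisField 2 t) :
    dA (fun p : GaloisField 2 m × GaloisField 2 m => τ (star (σ p.2) p.1) + h p.2) =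
      (2 ^ t - 1) * 2 ^ (m - t) * (2 ^ m - 1) := by
  simpa only [AddMonoidHom.mk'_apply, GaloisField.finrank 2 hm.ne',
    GaloisField.finrank 2 ht.ne'] using
    dist_to_affine_of_quasifield_type_bent_general
      (fun y => .mk' (star (σ y)) (hdist (σ y))) (fun a ha => (hbij1 a ha).comp hσ) τ hτ h
end

section
/- Let n ≥ 2 be an even integer, F = GaloisField 2 n, and h₁ : F → F the Field Inverse Function h₁(x) = x^(2^n − 2). Then, as real numbers, 2^n − √(2^(n+1)) − 3/2 ≤ dA(h₁), and dA(h₁) ≤ 2^n − 2^(n/2) − 2. (In particular dA(h₁) ≤ 2^n − 2^(n/2) − 1, the Liu–Mesnager–Chen bound.) -/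
/-!
The distance of `f` to the affine maps is the size of its domain minus the largest number of points
at which `f` agrees with an affine map. Among the points where `f` agrees with an affine map `A`,
every relation `x + y = z + w` forces `f x + f y = f z + f w`. The graph of inversion over the
nonzero elements of a field of characteristic two is a Sidon set, because two nonzero elements with
nonzero sum are determined up to order by their sum and the sum of their inverses. Hence the nonzero
points where inversion agrees with `A` form a Sidon set, and a Sidon set of size `k` in a group of
exponent two and order `N` satisfies `k (k - 1) / 2 < N`. Conversely, in a field with `q ^ 2`
elements, `q` a power of two, inversion agrees with the linear map `x ↦ x ^ q` at `0` and at the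
`q + 1` roots of `x ^ (q + 1) = 1`.
-/

/-- Sidon sets in groups of exponent two: the sum of two distinct elements determines the elements
up to order. Pairs `x = y` are left out because all of them have sum `0`. -/
def IsSidon {G : Type*} [Add G] (S : Set G) : Prop :=
  ∀ ⦃x⦄, x ∈ S → ∀ ⦃y⦄, y ∈ S → ∀ ⦃z⦄, z ∈ S → ∀ ⦃w⦄, w ∈ S →
    x ≠ y → x + y = z + w → s(x, y) = s(z, w)

namespace IsSidon

variable {G : Type*} [AddCommGroup G] {S : Set G}

theorem choose_two_ncard_lt [Module (ZMod 2) G] [Finite G] (hS : IsSidon S) :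
    S.ncard.choose 2 < Nat.card G := by
  classical
  have := Fintype.ofFinite G
  lift S to Finset G using S.toFinite
  let pairSum : Sym2 G → G := Sym2.lift ⟨(· + ·), add_comm⟩
  have pairSum_mapsTo : Set.MapsTo pairSum (S.offDiag.image Sym2.mk.uncurry)
      (Finset.univ.erase (0 : G)) := by
    intro p hp
    obtain ⟨⟨x, y⟩, hxy, rfl⟩ := Finset.mem_image.mp hp
    obtain ⟨-, -, hne⟩ := Finset.mem_offDiag.mp hxy
    rw [Finset.mem_coe, Finset.mem_erase]
    refine ⟨fun h ↦ hne ?_, Finset.mem_univ _⟩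
    rwa [← sub_eq_zero, ZModModule.sub_eq_add]
  have pairSum_injOn : Set.InjOn pairSum (S.offDiag.image Sym2.mk.uncurry) := by
    intro p hp p' hp' h
    obtain ⟨⟨x, y⟩, hxy, rfl⟩ := Finset.mem_image.mp hp
    obtain ⟨⟨z, w⟩, hzw, rfl⟩ := Finset.mem_image.mp hp'
    obtain ⟨hx, hy, hne⟩ := Finset.mem_offDiag.mp hxy
    obtain ⟨hz, hw, -⟩ := Finset.mem_offDiag.mp hzw
    exact hS hx hy hz hw hne h
  calc (S : Set G).ncard.choose 2 = (S.offDiag.image Sym2.mk.uncurry).card := by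
        rw [Set.ncard_coe_finset, Sym2.card_image_offDiag]
    _ ≤ (Finset.univ.erase (0 : G)).card :=
        Finset.card_le_card_of_injOn pairSum pairSum_mapsTo pairSum_injOn
    _ < Nat.card G := by
        rw [Nat.card_eq_fintype_card]
        exact Finset.card_erase_lt_of_mem (Finset.mem_univ 0)

theorem ncard_le_sqrt_add_half [Module (ZMod 2) G] [Finite G] (hS : IsSidon S) :
    (S.ncard : ℝ) ≤ √(2 * Nat.card G) + 1 / 2 := by
  have hchoose : (S.ncard : ℝ) * (S.ncard - 1) / 2 + 1 ≤ Nat.card G := by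
    rw [← Nat.cast_choose_two]
    exact_mod_cast hS.choose_two_ncard_lt
  rw [← sub_le_iff_le_add]
  exact Real.le_sqrt_of_sq_le (by linarith)

theorem setOf_eq_affine {H : Type*} [AddCommGroup H] {f : G → H} (hS : IsSidon (S.graphOn f))
    (L : G →+ H) (c : H) : IsSidon {x ∈ S | f x = L x + c} := by
  rintro x ⟨hxS, hx⟩ y ⟨hyS, hy⟩ z ⟨hzS, hz⟩ w ⟨hwS, hw⟩ hxy hadd
  have hf : f x + f y = f z + f w := by
    rw [hx, hy, hz, hw, add_add_add_comm, ← map_add, hadd, map_add, add_add_add_comm]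
  have hgraph := hS (Set.mem_image_of_mem _ hxS) (Set.mem_image_of_mem _ hyS)
    (Set.mem_image_of_mem _ hzS) (Set.mem_image_of_mem _ hwS)
    (fun h ↦ hxy (congrArg Prod.fst h)) (Prod.ext hadd hf)
  exact congrArg (Sym2.map Prod.fst) hgraph

end IsSidon

section DistanceToAffine

variable {V W : Type*} [AddCommGroup V] [AddCommGroup W] [Module (ZMod 2) V] [Module (ZMod 2) W]
  [Finite V]

theorem ncard_eq_affine_add_dA_le (f : V → W) (L : V →ₗ[ZMod 2] W) (c : W) :
    {x | f x = L x + c}.ncard + dA f ≤ Nat.card V := by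
  have hdA : dA f ≤ {x | f x = L x + c}ᶜ.ncard := Nat.sInf_le ⟨L, c, rfl⟩
  have := Set.ncard_add_ncard_compl {x | f x = L x + c}
  lia

theorem exists_ncard_eq_affine_add_dA_eq (f : V → W) :
    ∃ (L : V →ₗ[ZMod 2] W) (c : W), {x | f x = L x + c}.ncard + dA f = Nat.card V := by
  obtain ⟨L, c, hdA⟩ : ∃ (L : V →ₗ[ZMod 2] W) (c : W), dA f = {x | f x = L x + c}ᶜ.ncard :=
    Nat.sInf_mem (s := {d | ∃ (L : V →ₗ[ZMod 2] W) (c : W), d = {x | f x ≠ L x + c}.ncard})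
      ⟨_, 0, 0, rfl⟩
  exact ⟨L, c, hdA ▸ Set.ncard_add_ncard_compl {x | f x = L x + c}⟩

theorem natCard_sub_sqrt_sub_ncard_compl_le_dA {f : V → W} {S : Set V}
    (hS : IsSidon (S.graphOn f)) :
    (Nat.card V : ℝ) - √(2 * Nat.card V) - 1 / 2 - Sᶜ.ncard ≤ dA f := by
  obtain ⟨L, c, hdA⟩ := exists_ncard_eq_affine_add_dA_eq f
  have hagree : {x | f x = L x + c}.ncard ≤ {x ∈ S | f x = L x + c}.ncard + Sᶜ.ncard := by
    refine (Set.ncard_le_ncard fun x hx ↦ ?_).trans (Set.ncard_union_le _ _)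
    by_cases hxS : x ∈ S
    · exact Or.inl ⟨hxS, hx⟩
    · exact Or.inr hxS
  have hsidon : ({x ∈ S | f x = L x + c}.ncard : ℝ) ≤ √(2 * Nat.card V) + 1 / 2 :=
    (hS.setOf_eq_affine L.toAddMonoidHom c).ncard_le_sqrt_add_half
  rify at hdA hagree
  linarith

end DistanceToAffine

section Inversion

theorem sym2_eq_of_add_eq_of_mul_eq {R : Type*} [CommRing R] [IsDomain R] {x y z w : R}
    (hadd : x + y = z + w) (hmul : x * y = z * w) : s(x, y) = s(z, w) := by
  have hroot : (x - z) * (x - w) = 0 := by linear_combination x * hadd - hmul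
  rw [Sym2.eq_iff]
  rcases mul_eq_zero.mp hroot with h | h
  · exact Or.inl ⟨sub_eq_zero.mp h, by linear_combination hadd - h⟩
  · exact Or.inr ⟨sub_eq_zero.mp h, by linear_combination hadd - h⟩

variable {F : Type*} [Field F]

theorem sym2_eq_of_add_eq_of_inv_add_inv_eq {x y z w : F} (hx : x ≠ 0) (hy : y ≠ 0) (hz : z ≠ 0)
    (hw : w ≠ 0) (hxy : x + y ≠ 0) (hadd : x + y = z + w) (hinv : x⁻¹ + y⁻¹ = z⁻¹ + w⁻¹) :
    s(x, y) = s(z, w) := by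
  refine sym2_eq_of_add_eq_of_mul_eq hadd ?_
  rw [inv_add_inv hx hy, inv_add_inv hz hw, ← hadd] at hinv
  simpa only [div_eq_mul_inv, mul_right_inj' hxy, inv_inj] using hinv

theorem isSidon_graphOn_inv [CharP F 2] : IsSidon (({0}ᶜ : Set F).graphOn (·⁻¹)) := by
  rintro _ ⟨x, hx, rfl⟩ _ ⟨y, hy, rfl⟩ _ ⟨z, hz, rfl⟩ _ ⟨w, hw, rfl⟩ hxy hadd
  obtain ⟨hadd, hinv⟩ := Prod.ext_iff.mp hadd
  have hne : x + y ≠ 0 := fun h ↦ hxy (by rw [CharTwo.add_eq_zero.mp h])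
  exact congrArg (Sym2.map fun x ↦ (x, x⁻¹))
    (sym2_eq_of_add_eq_of_inv_add_inv_eq hx hy hz hw hne hadd hinv)

theorem natCard_sub_sqrt_sub_le_dA_inv [Finite F] [Algebra (ZMod 2) F] :
    (Nat.card F : ℝ) - √(2 * Nat.card F) - 3 / 2 ≤ dA (fun x : F ↦ x⁻¹) := by
  have : CharP F 2 := charP_of_injective_algebraMap (algebraMap (ZMod 2) F).injective 2
  have h := natCard_sub_sqrt_sub_ncard_compl_le_dA (isSidon_graphOn_inv (F := F))
  rw [compl_compl, Set.ncard_singleton] at h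
  push_cast at h
  linarith

theorem pow_natCard_sub_two_eq_inv (hF : 2 < Nat.card F) (x : F) :
    x ^ (Nat.card F - 2) = x⁻¹ := by
  have : Finite F := Nat.finite_of_card_ne_zero (by lia)
  have := Fintype.ofFinite F
  rw [Nat.card_eq_fintype_card] at hF ⊢
  rcases eq_or_ne x 0 with rfl | hx
  · rw [inv_zero, zero_pow (by lia)]
  · refine eq_inv_of_mul_eq_one_left ?_
    rw [← pow_succ, show Fintype.card F - 2 + 1 = Fintype.card F - 1 by lia]
    exact FiniteField.pow_card_sub_one_eq_one x hx

theorem ncard_pow_eq_one [Finite F] {d : ℕ} (hd : d ≠ 0) :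
    {x : F | x ^ d = 1}.ncard = (Nat.card F - 1).gcd d := by
  have himage : {x : F | x ^ d = 1} = Units.val '' ((powMonoidHom d : Fˣ →* Fˣ).ker : Set Fˣ) := by
    ext x
    constructor
    · intro hx
      exact ⟨Units.ofPowEqOne x d hx hd, Units.pow_ofPowEqOne hx hd, rfl⟩
    · rintro ⟨u, hu, rfl⟩
      exact congrArg Units.val hu
  rw [himage, Set.ncard_image_of_injective _ Units.val_injective, ← Nat.card_units]
  exact IsCyclic.card_powMonoidHom_ker Fˣ d

theorem ncard_inv_eq_pow [Finite F] {q : ℕ} (hq : q ≠ 0) :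
    {x : F | x⁻¹ = x ^ q}.ncard = (Nat.card F - 1).gcd (q + 1) + 1 := by
  have hinsert : {x : F | x⁻¹ = x ^ q} = insert 0 {x | x ^ (q + 1) = 1} := by
    ext x
    rcases eq_or_ne x 0 with rfl | hx
    · simp [hq]
    · simp [hx, pow_succ, eq_comm, ← mul_eq_one_iff_eq_inv₀]
  rw [hinsert, Set.ncard_insert_of_notMem (by simp), ncard_pow_eq_one q.succ_ne_zero]

theorem dA_inv_add_two_pow_add_two_le [Algebra (ZMod 2) F] {m : ℕ}
    (hF : Nat.card F = (2 ^ m) ^ 2) : dA (fun x : F ↦ x⁻¹) + 2 ^ m + 2 ≤ Nat.card F := by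
  have : Finite F := Nat.finite_of_card_ne_zero (by rw [hF]; positivity)
  have : CharP F 2 := charP_of_injective_algebraMap (algebraMap (ZMod 2) F).injective 2
  let frob : F →ₗ[ZMod 2] F := (iterateFrobenius F 2 m).toAddMonoidHom.toZModLinearMap 2
  have hagree : {x : F | x⁻¹ = frob x + 0}.ncard = 2 ^ m + 2 := by
    have hdvd : 2 ^ m + 1 ∣ Nat.card F - 1 := ⟨2 ^ m - 1, by rw [hF]; exact Nat.sq_sub_sq _ 1⟩
    calc {x : F | x⁻¹ = frob x + 0}.ncard = {x : F | x⁻¹ = x ^ 2 ^ m}.ncard := by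
          simp [frob, iterateFrobenius_def]
      _ = (Nat.card F - 1).gcd (2 ^ m + 1) + 1 := ncard_inv_eq_pow (by positivity)
      _ = 2 ^ m + 2 := by rw [Nat.gcd_eq_right hdvd]
  have := ncard_eq_affine_add_dA_le (fun x : F ↦ x⁻¹) frob 0
  lia

end Inversion

theorem dist_to_affine_of_inverse_function_general {F : Type*} [Field F] [Algebra (ZMod 2) F]
    {n : ℕ} (hF : Nat.card F = 2 ^ n) :
    (2 : ℝ) ^ n - √(2 ^ (n + 1)) - 3 / 2 ≤ dA (fun x : F ↦ x⁻¹) ∧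
      (Even n → (dA (fun x : F ↦ x⁻¹) : ℝ) ≤ 2 ^ n - 2 ^ (n / 2) - 2) := by
  have : Finite F := Nat.finite_of_card_ne_zero (by rw [hF]; positivity)
  constructor
  · simpa [hF, pow_succ'] using natCard_sub_sqrt_sub_le_dA_inv (F := F)
  · intro hn
    have hupper := dA_inv_add_two_pow_add_two_le (F := F) (m := n / 2)
      (by rw [hF, ← pow_mul, Nat.div_mul_cancel hn.two_dvd])
    rw [hF] at hupper
    rify at hupper
    linarith

theorem dist_to_affine_of_inverse_function
    (n : ℕ) (hn : 2 ≤ n) (hne : Even n)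
    (h₁ : GaloisField 2 n → GaloisField 2 n)
    (hh₁ : ∀ x, h₁ x = x ^ (2 ^ n - 2)) :
    (2 : ℝ) ^ n - Real.sqrt (2 ^ (n + 1)) - 3 / 2 ≤ (dA h₁ : ℝ) ∧
      (dA h₁ : ℝ) ≤ 2 ^ n - 2 ^ (n / 2) - 2 := by
  have hcard : Nat.card (GaloisField 2 n) = 2 ^ n := GaloisField.card 2 n (by lia)
  have hlt : 2 < Nat.card (GaloisField 2 n) := hcard ▸ lt_self_pow₀ one_lt_two hn
  obtain rfl : h₁ = fun x ↦ x⁻¹ :=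
    funext fun x ↦ by rw [hh₁, ← hcard, pow_natCard_sub_two_eq_inv hlt]
  exact (dist_to_affine_of_inverse_function_general hcard).imp_right (· hne)
end

section
/- Let n ≥ 4 be an integer divisible by 4, F = GaloisField 2 n, d = 2^(n/2 − 1) + 1, and h₂ : F → F the Gold-type power function h₂(x) = x^d. Then, as real numbers, 2^n − √(2^(n+1)) − 1/2 ≤ dA(h₂), and dA(h₂) ≤ 2^n − 2^(n/2) − 2. (In particular dA(h₂) ≤ 2^n − 2^(n/2) − 1, the Liu–Mesnager–Chen bound.) -/
/-!
The power map `x ↦ x ^ (2 ^ k + 1)` is almost perfect nonlinear on the field with `2 ^ n` elements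
when `k` is coprime to `n`: its derivatives are affine with linear part
`u ↦ u ^ 2 ^ k * a + a ^ 2 ^ k * u`, whose nonzero roots `u` make `u / a` a nonzero fixed point of
both the `k`-th and the `n`-th power of Frobenius, hence an element of `𝔽₂ˣ = {1}`. If an almost
perfect nonlinear map agrees with an affine map on a set `S`, then every nonzero `a` is a
difference of at most two ordered pairs in `S`, so `|S| (|S| - 1) ≤ 2 (2 ^ n - 1)`.

For the upper bound take `n = 2 (k + 1)` and put `q = 2 ^ (k + 1)`. The map `x ↦ x ^ (2 ^ k + 1)`
agrees with the linear map `x ↦ x ^ 2 ^ (2 k + 1)`, the inverse of squaring, at `0` and at the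
`q + 1` solutions of `x ^ (q + 1) = 1`.
-/

section DistanceToAffine

variable {V W : Type*} [AddCommGroup V] [AddCommGroup W] [Module (ZMod 2) V] [Module (ZMod 2) W]
  [Finite V]

lemma exists_dA_add_ncard_eq_card (f : V → W) :
    ∃ (L : V →ₗ[ZMod 2] W) (c : W), dA f + {x | f x = L x + c}.ncard = Nat.card V := by
  obtain ⟨L, c, hLc⟩ : dA f ∈ {d : ℕ | ∃ (L : V →ₗ[ZMod 2] W) (c : W),
      d = {x | f x ≠ L x + c}.ncard} := Nat.sInf_mem ⟨_, 0, 0, rfl⟩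
  refine ⟨L, c, ?_⟩
  rw [hLc, add_comm]
  exact Set.ncard_add_ncard_compl {x | f x = L x + c}

lemma dA_add_ncard_le_card (f : V → W) (L : V →ₗ[ZMod 2] W) (c : W) :
    dA f + {x | f x = L x + c}.ncard ≤ Nat.card V := by
  have hle : dA f ≤ {x | f x ≠ L x + c}.ncard := Nat.sInf_le ⟨L, c, rfl⟩
  rw [← Set.ncard_add_ncard_compl {x | f x = L x + c}, add_comm]
  exact Nat.add_le_add_left hle _

end DistanceToAffine

/-- A map between groups is almost perfect nonlinear (APN) if each of its derivatives
`x ↦ f (x + a) - f x` with `a ≠ 0` takes every value at most twice. Cardinalities are taken with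
`Set.encard`, so that infinite fibres are excluded. -/
def IsAPN {G H : Type*} [AddGroup G] [AddGroup H] (f : G → H) : Prop :=
  ∀ a ≠ 0, ∀ b, {x | f (x + a) - f x = b}.encard ≤ 2

lemma card_mul_card_sub_one_le_of_card_filter_add_mem_le {G : Type*} [AddGroup G] [Fintype G]
    [DecidableEq G] {S : Finset G} {m : ℕ} (hS : ∀ a ≠ 0, {x ∈ S | x + a ∈ S}.card ≤ m) :
    S.card * (S.card - 1) ≤ m * (Fintype.card G - 1) := by
  have hmaps : ∀ p ∈ S.offDiag, -p.1 + p.2 ∈ Finset.univ.erase (0 : G) := by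
    intro p hp
    simpa [neg_add_eq_zero] using (Finset.mem_offDiag.1 hp).2.2
  have hfiber : ∀ a ∈ Finset.univ.erase (0 : G), {p ∈ S.offDiag | -p.1 + p.2 = a}.card ≤ m := by
    intro a ha
    refine le_trans ?_ (hS a (Finset.ne_of_mem_erase ha))
    refine Finset.card_le_card_of_injOn Prod.fst ?_ ?_
    · rintro ⟨x, y⟩ hp
      obtain ⟨⟨hx, hy, -⟩, rfl⟩ := by simpa using hp
      simpa using ⟨hx, hy⟩
    · rintro ⟨x, y⟩ hp ⟨x', y'⟩ hp' (rfl : x = x')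
      have hy : -x + y = a := (Finset.mem_filter.1 hp).2
      have hy' : -x + y' = a := (Finset.mem_filter.1 hp').2
      rw [add_left_cancel (hy.trans hy'.symm)]
  have hcard := Finset.card_le_mul_card_image_of_maps_to hmaps m hfiber
  rwa [Finset.offDiag_card, Finset.card_erase_of_mem (Finset.mem_univ _), Finset.card_univ,
    ← Nat.mul_sub_one] at hcard

lemma IsAPN.ncard_mul_ncard_sub_one_le {G H : Type*} [AddGroup G] [AddCommGroup H] [Finite G]
    {f : G → H} (hf : IsAPN f) (L : G →+ H) (c : H) :
    {x | f x = L x + c}.ncard * ({x | f x = L x + c}.ncard - 1) ≤ 2 * (Nat.card G - 1) := by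
  classical
  have := Fintype.ofFinite G
  rw [Set.ncard_eq_toFinset_card', Nat.card_eq_fintype_card]
  refine card_mul_card_sub_one_le_of_card_filter_add_mem_le fun a ha ↦ ?_
  rw [← Nat.cast_le (α := ℕ∞), ← Set.encard_coe_eq_coe_finsetCard]
  refine (Set.encard_le_encard fun x hx ↦ ?_).trans (hf a ha (L a))
  obtain ⟨hx, hxa⟩ : f x = L x + c ∧ f (x + a) = L (x + a) + c := by simpa using hx
  change f (x + a) - f x = L a
  rw [hx, hxa, map_add]
  abel

lemma IsAPN.card_sub_sqrt_sub_half_le_dA {V W : Type*} [AddCommGroup V] [AddCommGroup W]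
    [Module (ZMod 2) V] [Module (ZMod 2) W] [Finite V] {f : V → W} (hf : IsAPN f) :
    (Nat.card V : ℝ) - √(2 * Nat.card V) - 1 / 2 ≤ dA f := by
  obtain ⟨L, c, hLc⟩ := exists_dA_add_ncard_eq_card f
  have hS := hf.ncard_mul_ncard_sub_one_le L.toAddMonoidHom c
  change {x | f x = L x + c}.ncard * ({x | f x = L x + c}.ncard - 1) ≤ _ at hS
  set s := {x | f x = L x + c}.ncard
  have hquad : (s : ℝ) * s + 2 ≤ 2 * Nat.card V + s := by
    have hV : 0 < Nat.card V := Nat.card_pos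
    rw [Nat.mul_sub_one] at hS
    exact_mod_cast (by lia : s * s + 2 ≤ 2 * Nat.card V + s)
  have hs : (s : ℝ) - 1 / 2 ≤ √(2 * Nat.card V) := Real.le_sqrt_of_sq_le (by linarith)
  have hLc' : (dA f : ℝ) + s = Nat.card V := mod_cast hLc
  linarith

lemma pow_eq_self_of_pow_pow_eq_self_of_coprime {M : Type*} [Monoid M] {p k n : ℕ} {t : M}
    (hkn : k.Coprime n) (hk : t ^ p ^ k = t) (hn : t ^ p ^ n = t) : t ^ p = t := by
  have hperiodic {j : ℕ} (hj : t ^ p ^ j = t) : Function.IsPeriodicPt (· ^ p) j t := by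
    rwa [Function.IsPeriodicPt, Function.IsFixedPt, pow_iterate]
  have hgcd := (hperiodic hk).gcd (hperiodic hn)
  rwa [hkn.gcd_eq_one] at hgcd

lemma eq_zero_or_eq_of_pow_two_pow_mul_eq {F : Type*} [Field F] {k n : ℕ}
    (hF : Nat.card F = 2 ^ n) (hkn : k.Coprime n) {a u : F} (ha : a ≠ 0)
    (hu : u ^ 2 ^ k * a = a ^ 2 ^ k * u) : u = 0 ∨ u = a := by
  have hk : (u / a) ^ 2 ^ k = u / a := by
    rw [div_pow, div_eq_div_iff (pow_ne_zero _ ha) ha, hu, mul_comm]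
  have hn : (u / a) ^ 2 ^ n = u / a := by
    have : Finite F := Nat.finite_of_card_ne_zero (by simp [hF])
    have := Fintype.ofFinite F
    rw [← hF, Nat.card_eq_fintype_card, FiniteField.pow_card]
  have hidem : IsIdempotentElem (u / a) := by
    rw [IsIdempotentElem, ← sq]
    exact pow_eq_self_of_pow_pow_eq_self_of_coprime hkn hk hn
  simpa [ha, div_eq_one_iff_eq] using IsIdempotentElem.iff_eq_zero_or_one.1 hidem

lemma isAPN_pow_two_pow_add_one {F : Type*} [Field F] [CharP F 2] {k n : ℕ}
    (hF : Nat.card F = 2 ^ n) (hkn : k.Coprime n) : IsAPN fun x : F ↦ x ^ (2 ^ k + 1) := by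
  intro a ha b
  have hderiv (x : F) : (x + a) ^ (2 ^ k + 1) - x ^ (2 ^ k + 1) =
      x ^ 2 ^ k * a + a ^ 2 ^ k * x + a ^ (2 ^ k + 1) := by
    simp only [pow_succ, add_pow_char_pow]
    ring
  simp only [hderiv]
  rcases Set.eq_empty_or_nonempty {x : F | x ^ 2 ^ k * a + a ^ 2 ^ k * x + a ^ (2 ^ k + 1) = b}
    with hempty | ⟨x, hx⟩
  · simp [hempty]
  have hne : x ≠ x + a := by simpa using ha
  refine (Set.encard_le_encard fun y hy ↦ ?_).trans (Set.encard_pair hne).le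
  have hdiff : (y - x) ^ 2 ^ k * a = a ^ 2 ^ k * (y - x) := by
    rw [sub_pow_char_pow, ← sub_eq_zero, CharTwo.sub_eq_add]
    linear_combination hy.trans hx.symm
  refine (eq_zero_or_eq_of_pow_two_pow_mul_eq hF hkn ha hdiff).imp sub_eq_zero.1 fun h ↦ ?_
  rw [Set.mem_singleton_iff, ← h, add_sub_cancel]

lemma ncard_setOf_pow_eq_one {F : Type*} [Field F] [Finite F] {m : ℕ}
    (hm : m ∣ Nat.card F - 1) : {x : F | x ^ m = 1}.ncard = m := by
  have : NeZero m := by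
    refine ⟨?_⟩
    rintro rfl
    have := Finite.one_lt_card (α := F)
    rw [zero_dvd_iff] at hm
    lia
  calc {x : F | x ^ m = 1}.ncard
      = Nat.card (rootsOfUnity m F) := by
        rw [← Units.val_set_image_rootsOfUnity, Set.ncard_image_of_injective _ Units.val_injective]
        rfl
    _ = m := by
        rw [rootsOfUnity_eq_ker, IsCyclic.card_powMonoidHom_ker, Nat.card_units,
          Nat.gcd_eq_right hm]

lemma add_two_le_ncard_setOf_pow_two_pow_add_one_eq {F : Type*} [Field F] {k : ℕ}
    (hF : Nat.card F = 2 ^ (2 * (k + 1))) :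
    2 ^ (k + 1) + 2 ≤ {x : F | x ^ (2 ^ k + 1) = x ^ 2 ^ (2 * k + 1)}.ncard := by
  have : Finite F := Nat.finite_of_card_ne_zero (by simp [hF])
  have hdvd : 2 ^ (k + 1) + 1 ∣ Nat.card F - 1 := by
    rw [hF, mul_comm, pow_mul]
    exact ⟨_, by simpa using Nat.sq_sub_sq (2 ^ (k + 1)) 1⟩
  have hexp : 2 ^ (2 * k + 1) = 2 ^ k + 1 + (2 ^ (k + 1) + 1) * (2 ^ k - 1) := by
    obtain ⟨s, hs⟩ := Nat.exists_eq_add_of_le' (Nat.one_le_two_pow (n := k))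
    rw [pow_succ, mul_comm 2 k, pow_mul, pow_succ 2 k, hs, Nat.add_sub_cancel]
    ring
  calc 2 ^ (k + 1) + 2
      = (insert 0 {x : F | x ^ (2 ^ (k + 1) + 1) = 1}).ncard := by
        rw [Set.ncard_insert_of_notMem (by simp), ncard_setOf_pow_eq_one hdvd]
    _ ≤ _ := Set.ncard_le_ncard ?_
  rintro x (rfl | (hx : x ^ (2 ^ (k + 1) + 1) = 1))
  · simp
  · change x ^ (2 ^ k + 1) = x ^ 2 ^ (2 * k + 1)
    rw [hexp, pow_add x (2 ^ k + 1), pow_mul, hx, one_pow, mul_one]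

lemma dA_pow_two_pow_add_one_le {F : Type*} [Field F] [Algebra (ZMod 2) F] {k : ℕ}
    (hF : Nat.card F = 2 ^ (2 * (k + 1))) :
    dA (fun x : F ↦ x ^ (2 ^ k + 1)) + (2 ^ (k + 1) + 2) ≤ 2 ^ (2 * (k + 1)) := by
  have : Finite F := Nat.finite_of_card_ne_zero (by simp [hF])
  let L : F →ₗ[ZMod 2] F := (FiniteField.frobeniusAlgHom (ZMod 2) F ^ (2 * k + 1)).toLinearMap
  have hL (x : F) : L x = x ^ 2 ^ (2 * k + 1) := by
    simp only [L, AlgHom.toLinearMap_apply, AlgHom.coe_pow, FiniteField.coe_frobeniusAlgHom,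
      pow_iterate, ZMod.card]
  have hdist := dA_add_ncard_le_card (fun x : F ↦ x ^ (2 ^ k + 1)) L 0
  simp only [hL, add_zero, hF] at hdist
  exact (Nat.add_le_add_left (add_two_le_ncard_setOf_pow_two_pow_add_one_eq hF) _).trans hdist

theorem dist_to_affine_of_gold_function_general {F : Type*} [Field F] [Algebra (ZMod 2) F]
    {n : ℕ} (hn4 : 4 ∣ n) (hF : Nat.card F = 2 ^ n) :
    (2 : ℝ) ^ n - √(2 ^ (n + 1)) - 1 / 2 ≤ dA (fun x : F ↦ x ^ (2 ^ (n / 2 - 1) + 1)) ∧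
      (dA (fun x : F ↦ x ^ (2 ^ (n / 2 - 1) + 1)) : ℝ) ≤ 2 ^ n - 2 ^ (n / 2) - 2 := by
  have : CharP F 2 := charP_of_injective_algebraMap' (ZMod 2) 2
  have : Finite F := Nat.finite_of_card_ne_zero (by simp [hF])
  have hn : n ≠ 0 := by
    rintro rfl
    exact Finite.one_lt_card.ne' hF
  obtain ⟨k, hk, rfl⟩ : ∃ k, Odd k ∧ n = 2 * (k + 1) := ⟨n / 2 - 1, by grind, by lia⟩
  have hcoprime : k.Coprime (2 * (k + 1)) := by simpa [Nat.coprime_mul_iff_right] using hk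
  rw [Nat.mul_div_cancel_left _ two_pos, Nat.add_sub_cancel]
  constructor
  · have hlower := (isAPN_pow_two_pow_add_one hF hcoprime).card_sub_sqrt_sub_half_le_dA
    rw [hF, Nat.cast_pow, Nat.cast_ofNat, ← pow_succ'] at hlower
    exact hlower
  · have hupper : (dA (fun x : F ↦ x ^ (2 ^ k + 1)) : ℝ) + (2 ^ (k + 1) + 2) ≤ 2 ^ (2 * (k + 1)) :=
      mod_cast dA_pow_two_pow_add_one_le hF
    linarith

theorem dist_to_affine_of_gold_function
    (n : ℕ) (hn : 4 ≤ n) (hn4 : 4 ∣ n)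
    (d : ℕ) (hd : d = 2 ^ (n / 2 - 1) + 1)
    (h₂ : GaloisField 2 n → GaloisField 2 n)
    (hh₂ : ∀ x, h₂ x = x ^ d) :
    (2 : ℝ) ^ n - Real.sqrt (2 ^ (n + 1)) - 1 / 2 ≤ (dA h₂ : ℝ) ∧
      (dA h₂ : ℝ) ≤ 2 ^ n - 2 ^ (n / 2) - 2 := by
  rw [funext hh₂, hd]
  exact dist_to_affine_of_gold_function_general hn4 (GaloisField.card 2 n (by lia))
end

section
/- Let n, m be positive integers, V = (Fin n → ZMod 2), W = (Fin m → ZMod 2), and f : V → W. For a ∈ V, v ∈ W define the Walsh transform W_f(a,v) = ∑_{x ∈ V} χ(v·f(x) + a·x) ∈ ℤ, where χ : ZMod 2 → ℤ sends 0 ↦ 1 and 1 ↦ −1, and u·w = ∑ᵢ uᵢwᵢ is the inner product. Then the integer 2^m · (2^n − dA(f)) is the greatest element of the set { ∑_{v ∈ W} χ(v·b) · W_f(L(v), v) : b ∈ W, L : W →ₗ[ZMod 2] V }; i.e. dA(f) = 2^n − 2^(−m) · max over b ∈ W and 𝔽₂-linear maps L : W → V of ∑_{v ∈ W} χ(v·b)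 W_f(L(v), v). -/
/-- The sign character of ZMod 2: chi 0 = 1, chi 1 = -1. -/
def chi (x : ZMod 2) : ℤ := if x = 0 then 1 else -1

/-!
Let `p` and `q` be perfect pairings of `V'` with `V` and of `W'` with `W`. If `A : V → W` is adjoint
to `L : W' → V'`, then `q w b + (q w (f x) + p (L w) x) = q w (f x - (A x + b))`. When `chi` of this
is summed over `w` and `x`, orthogonality of characters in `w` leaves `|W'|` times the number of
points where `f` agrees with the affine map `x ↦ A x + b`. Every linear `L` has an adjoint `A` and
conversely, hence maximising the character sum over `b` and `L` is minimising the distance over all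
affine maps. The dot product is one perfect pairing; the trace form of a finite field is another.
-/

section Adjoint

variable {R M M' N N' : Type*} [CommRing R]
  [AddCommGroup M] [Module R M] [AddCommGroup M'] [Module R M']
  [AddCommGroup N] [Module R N] [AddCommGroup N'] [Module R N']

theorem exists_adjoint_of_isPerfPair (q : M' →ₗ[R] M →ₗ[R] R) [q.IsPerfPair]
    (p : N' →ₗ[R] N →ₗ[R] R) (L : M' →ₗ[R] N') :
    ∃ A : N →ₗ[R] M, ∀ w x, q w (A x) = p (L w) x :=
  ⟨q.flip.toPerfPair.symm ∘ₗ L.dualMap ∘ₗ p.flip, fun w x => by simp⟩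

theorem separatingRight_of_isPerfPair (q : M' →ₗ[R] M →ₗ[R] R) [q.IsPerfPair] :
    q.SeparatingRight :=
  LinearMap.separatingRight_iff_flip_ker_eq_bot.mpr
    (LinearMap.ker_eq_bot.mpr (LinearMap.IsPerfPair.bijective_right q).injective)

end Adjoint

section DistanceToAffine

variable {V W : Type*} [AddCommGroup V] [AddCommGroup W] [Module (ZMod 2) V] [Module (ZMod 2) W]

theorem dA_le_ncard (f : V → W) (A : V →ₗ[ZMod 2] W) (b : W) :
    dA f ≤ {x | f x ≠ A x + b}.ncard :=
  Nat.sInf_le ⟨A, b, rfl⟩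

theorem exists_dA_eq_ncard (f : V → W) :
    ∃ (A : V →ₗ[ZMod 2] W) (b : W), dA f = {x | f x ≠ A x + b}.ncard :=
  Nat.sInf_mem (s := {d | ∃ (A : V →ₗ[ZMod 2] W) (b : W), d = {x | f x ≠ A x + b}.ncard})
    ⟨_, 0, 0, rfl⟩

end DistanceToAffine

/-- `chi` as an additive character, giving access to the orthogonality relations for characters. -/
def chiAddChar : AddChar (ZMod 2) ℤ where
  toFun := chi
  map_zero_eq_one' := rfl
  map_add_eq_mul' := by decide

theorem chi_add (a b : ZMod 2) : chi (a + b) = chi a * chi b :=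
  chiAddChar.map_add_eq_mul a b

theorem chi_eq_one_iff {a : ZMod 2} : chi a = 1 ↔ a = 0 := by
  simp [chi]

section CharacterSums

variable {V V' W W' : Type*} [AddCommGroup V] [Module (ZMod 2) V] [AddCommGroup V']
  [Module (ZMod 2) V'] [AddCommGroup W] [Module (ZMod 2) W] [AddCommGroup W'] [Module (ZMod 2) W']

theorem sum_chi_pairing [Fintype W'] [DecidableEq W] {q : W' →ₗ[ZMod 2] W →ₗ[ZMod 2] ZMod 2}
    (hq : q.SeparatingRight) (y : W) :
    ∑ w, chi (q w y) = if y = 0 then (Fintype.card W' : ℤ) else 0 := by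
  classical
  let ψ : AddChar W' ℤ := chiAddChar.compAddMonoidHom (q.flip y).toAddMonoidHom
  have ψ_eq_zero_iff : ψ = 0 ↔ y = 0 := by
    rw [AddChar.eq_zero_iff]
    exact (forall_congr' fun w => chi_eq_one_iff).trans ⟨hq y, fun hy w => by simp [hy]⟩
  calc ∑ w, chi (q w y) = ∑ w, ψ w := rfl
    _ = if y = 0 then (Fintype.card W' : ℤ) else 0 := by
      simp only [ψ.sum_eq_ite, ψ_eq_zero_iff]

theorem sum_sum_chi_pairing_sub {X : Type*} [Fintype X] [Fintype W']
    {q : W' →ₗ[ZMod 2] W →ₗ[ZMod 2] ZMod 2} (hq : q.SeparatingRight) (f g : X → W) :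
    ∑ w, ∑ x, chi (q w (f x - g x)) =
      (Fintype.card W' : ℤ) * (Fintype.card X - ({x | f x ≠ g x}.ncard : ℤ)) := by
  classical
  have card_agree : ((Finset.univ.filter fun x => f x = g x).card : ℤ) =
      Fintype.card X - ({x | f x ≠ g x}.ncard : ℤ) := by
    rw [Set.ncard_eq_toFinset_card', Set.toFinset_ofPred, eq_sub_iff_add_eq]
    exact_mod_cast Finset.card_filter_add_card_filter_not (s := Finset.univ) fun x => f x = g x
  calc ∑ w, ∑ x, chi (q w (f x - g x))
      = ∑ x, if f x = g x then (Fintype.card W' : ℤ) else 0 := by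
        rw [Finset.sum_comm]
        simp only [sum_chi_pairing hq, sub_eq_zero]
    _ = (Fintype.card W' : ℤ) * (Finset.univ.filter fun x => f x = g x).card := by
        rw [← Finset.sum_filter, Finset.sum_const, nsmul_eq_mul, mul_comm]
    _ = _ := by rw [card_agree]

/-- The Walsh transform `W_f(a, w)`, with the inner products on the source and the target of `f`
replaced by bilinear pairings `p` and `q`. -/
def walshTransform [Fintype V] (p : V' →ₗ[ZMod 2] V →ₗ[ZMod 2] ZMod 2)
    (q : W' →ₗ[ZMod 2] W →ₗ[ZMod 2] ZMod 2) (f : V → W) (a : V') (w : W') : ℤ :=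
  ∑ x, chi (q w (f x) + p a x)

variable [Fintype V] [Fintype W'] {p : V' →ₗ[ZMod 2] V →ₗ[ZMod 2] ZMod 2}
  {q : W' →ₗ[ZMod 2] W →ₗ[ZMod 2] ZMod 2}

theorem sum_chi_mul_walshTransform (hq : q.SeparatingRight) (f : V → W) {L : W' → V'} {A : V → W}
    (hLA : ∀ w x, q w (A x) = p (L w) x) (b : W) :
    ∑ w, chi (q w b) * walshTransform p q f (L w) w =
      (Fintype.card W' : ℤ) * (Fintype.card V - ({x | f x ≠ A x + b}.ncard : ℤ)) := by
  have chi_mul_chi (w : W') (x : V) : chi (q w b) * chi (q w (f x) + p (L w) x) =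
      chi (q w (f x - (A x + b))) := by
    rw [← chi_add, ZModModule.sub_eq_add, map_add, map_add, hLA]
    congr 1
    ring
  simp only [walshTransform, Finset.mul_sum, chi_mul_chi]
  exact sum_sum_chi_pairing_sub hq f fun x => A x + b

theorem dist_to_affine_walsh_formula_general (p : V' →ₗ[ZMod 2] V →ₗ[ZMod 2] ZMod 2)
    (q : W' →ₗ[ZMod 2] W →ₗ[ZMod 2] ZMod 2) [p.IsPerfPair] [q.IsPerfPair] (f : V → W) :
    IsGreatest
      { z : ℤ | ∃ (b : W) (L : W' →ₗ[ZMod 2] V'),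
          z = ∑ w, chi (q w b) * walshTransform p q f (L w) w }
      ((Fintype.card W' : ℤ) * (Fintype.card V - (dA f : ℤ))) := by
  have hq : q.SeparatingRight := separatingRight_of_isPerfPair q
  constructor
  · obtain ⟨A, b, hAb⟩ := exists_dA_eq_ncard f
    obtain ⟨L, hLA⟩ := exists_adjoint_of_isPerfPair p.flip q.flip A
    refine ⟨b, L, ?_⟩
    rw [sum_chi_mul_walshTransform hq f (fun w x => (hLA x w).symm) b, hAb]
  · rintro _ ⟨b, L, rfl⟩
    obtain ⟨A, hLA⟩ := exists_adjoint_of_isPerfPair q p L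
    rw [sum_chi_mul_walshTransform hq f hLA b]
    gcongr
    exact dA_le_ncard f A b

end CharacterSums

theorem dist_to_affine_walsh_formula
    (n m : ℕ) (hn : 0 < n) (hm : 0 < m)
    (f : (Fin n → ZMod 2) → (Fin m → ZMod 2)) :
    IsGreatest
      { z : ℤ | ∃ (b : Fin m → ZMod 2)
          (L : (Fin m → ZMod 2) →ₗ[ZMod 2] (Fin n → ZMod 2)),
          z = ∑ v : Fin m → ZMod 2, chi (∑ i, v i * b i) *
                ∑ x : Fin n → ZMod 2, chi ((∑ i, v i * f x i) + ∑ i, L v i * x i) }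
      ((2 : ℤ) ^ m * ((2 : ℤ) ^ n - (dA f : ℤ))) := by
  simpa [walshTransform, dotProduct] using dist_to_affine_walsh_formula_general
    (dotProductEquiv (ZMod 2) (Fin n)).toLinearMap (dotProductEquiv (ZMod 2) (Fin m)).toLinearMap f
end

section
/- Let t ≤ m be positive integers, F = GaloisField 2 m, T = GaloisField 2 t. Let τ : F → T be a surjective 𝔽₂-linear map, π : F → F a bijection, and h : F → T arbitrary. Then f : F × F → T defined by f(x,y) = τ(x · π(y)) + h(y) (where x · π(y) is the field product in F) is a (2m,t)-bent function. -/
noncomputable instance (n : ℕ) : Fintype (GaloisField 2 n) := Fintype.ofFinite _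

/-!
Fix `y` and sum over `x` first. The trace form is nondegenerate, so the nonzero functional
`x ↦ Tr (u * τ x)` is `x ↦ Tr (c * x)` with `c ≠ 0`, and the inner sum runs over the additive
character `x ↦ χ (Tr ((c * π y + a) * x))`. It vanishes unless `c * π y + a = 0`, which happens for
exactly one `y₀` because `π` is a bijection. Hence the whole sum is `|F|` times a single value
of `χ`.
-/

theorem sum_mul_addChar_eq_card_mul {A Y R : Type*} [AddGroup A] [Fintype A] [Fintype Y]
    [CommSemiring R] [IsDomain R] {ψ : Y → AddChar A R} {y₀ : Y}
    (hψ : ∀ y, ψ y = 0 ↔ y = y₀) (g : Y → R) :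
    ∑ p : A × Y, g p.2 * ψ p.2 p.1 = Fintype.card A * g y₀ := by
  classical
  simp only [Fintype.sum_prod_type_right, ← Finset.mul_sum, AddChar.sum_eq_ite, hψ, mul_ite,
    mul_zero, Finset.sum_ite_eq', Finset.mem_univ, if_true]
  exact mul_comm _ _

section Trace

variable {K E : Type*} [Field K] [Field E] [Algebra K E] [FiniteDimensional K E]
  [Algebra.IsSeparable K E]

theorem exists_ne_zero_forall_trace_mul_eq {φ : E →ₗ[K] K} (hφ : φ ≠ 0) :
    ∃ c ≠ 0, ∀ x, Algebra.trace K E (c * x) = φ x := by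
  let dual := (Algebra.traceForm K E).toDual (traceForm_nondegenerate K E)
  exact ⟨dual.symm φ, dual.symm.map_ne_zero_iff.mpr hφ, fun x =>
    LinearMap.BilinForm.apply_toDual_symm_apply (hB := traceForm_nondegenerate K E) φ x⟩

theorem trace_comp_mulLeft_comp_ne_zero {V : Type*} [AddCommGroup V] [Module K V]
    {τ : V →ₗ[K] E} (hτ : Function.Surjective τ) {u : E} (hu : u ≠ 0) :
    Algebra.trace K E ∘ₗ LinearMap.mulLeft K u ∘ₗ τ ≠ 0 := by
  intro h
  refine hu ((traceForm_nondegenerate K E).1 u fun z => ?_)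
  obtain ⟨x, rfl⟩ := hτ z
  exact LinearMap.congr_fun h x

theorem isPrimitive_compAddMonoidHom_trace {M : Type*} [CommMonoid M] {χ : AddChar K M}
    (hχ : χ ≠ 1) :
    (χ.compAddMonoidHom (Algebra.trace K E).toAddMonoidHom).IsPrimitive := by
  obtain ⟨z, hz⟩ := AddChar.ne_one_iff.mp hχ
  obtain ⟨x, rfl⟩ := Algebra.trace_surjective K E z
  exact .of_ne_one (AddChar.ne_one_iff.mpr ⟨x, hz⟩)

end Trace

section MaioranaMcFarland

variable {K F R : Type*} [Field K] [Field F] [Fintype F] [Algebra K F]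
  [CommSemiring R] [IsDomain R] {χ : AddChar K R} {π : F → F}

theorem exists_sum_maioranaMcFarland_eq_card_mul (hχ : χ ≠ 1) {φ : F →ₗ[K] K} (hφ : φ ≠ 0)
    (hπ : Function.Bijective π) (a : F) (g : F → R) :
    ∃ y₀, ∑ p : F × F, g p.2 * χ (φ (p.1 * π p.2) + Algebra.trace K F (a * p.1)) =
      Fintype.card F * g y₀ := by
  have : Finite K := .of_injective _ (algebraMap K F).injective
  obtain ⟨c, hc, hφc⟩ := exists_ne_zero_forall_trace_mul_eq hφ
  obtain ⟨y₀, hy₀⟩ := hπ.surjective (-a / c)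
  have shift_eq_zero_iff (y : F) : c * π y + a = 0 ↔ y = y₀ := by
    rw [← hπ.injective.eq_iff (a := y), hy₀, eq_div_iff hc, eq_neg_iff_add_eq_zero, mul_comm]
  let ψ := χ.compAddMonoidHom (Algebra.trace K F).toAddMonoidHom
  have mulShift_injective : Function.Injective ψ.mulShift :=
    AddChar.to_mulShift_inj_of_isPrimitive (isPrimitive_compAddMonoidHom_trace hχ)
  have mulShift_eq_zero_iff (y : F) : ψ.mulShift (c * π y + a) = 0 ↔ y = y₀ :=
    (mulShift_injective.eq_iff' ψ.mulShift_zero).trans (shift_eq_zero_iff y)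
  have mulShift_apply (x y : F) :
      ψ.mulShift (c * π y + a) x = χ (φ (x * π y) + Algebra.trace K F (a * x)) := by
    have shift_mul : (c * π y + a) * x = c * (x * π y) + a * x := by ring
    rw [AddChar.mulShift_apply, AddChar.compAddMonoidHom_apply, LinearMap.toAddMonoidHom_coe,
      shift_mul, map_add, hφc]
  refine ⟨y₀, ?_⟩
  simpa only [mulShift_apply] using sum_mul_addChar_eq_card_mul mulShift_eq_zero_iff g

theorem maiorana_mcfarland_type_is_bent_general {T : Type*} [Field T] [Algebra K T]
    (hχ : χ ≠ 1) (τ : F →ₗ[K] T) (hτ : Function.Surjective τ) (hπ : Function.Bijective π)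
    (h : F → T) {u : T} (hu : u ≠ 0) (a b : F) :
    ∃ y₀, ∑ p : F × F, χ (Algebra.trace K T (u * (τ (p.1 * π p.2) + h p.2)) +
        Algebra.trace K F (a * p.1) + Algebra.trace K F (b * p.2)) =
      Fintype.card F * χ (Algebra.trace K T (u * h y₀) + Algebra.trace K F (b * y₀)) := by
  have : Finite K := .of_injective _ (algebraMap K F).injective
  have : FiniteDimensional K T := .of_surjective τ hτ
  obtain ⟨y₀, hy₀⟩ := exists_sum_maioranaMcFarland_eq_card_mul hχ
    (trace_comp_mulLeft_comp_ne_zero hτ hu) hπ a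
    fun y => χ (Algebra.trace K T (u * h y) + Algebra.trace K F (b * y))
  refine ⟨y₀, hy₀ ▸ Finset.sum_congr rfl fun p _ => ?_⟩
  rw [← χ.map_add_eq_mul, LinearMap.comp_apply, LinearMap.comp_apply, LinearMap.mulLeft_apply,
    mul_add, map_add (Algebra.trace K T)]
  congr 1
  ring

end MaioranaMcFarland

theorem chiAddChar_apply (x : ZMod 2) : chiAddChar x = chi x := rfl

theorem chiAddChar_ne_one : chiAddChar ≠ 1 := AddChar.ne_one_iff.mpr ⟨1, by decide⟩

theorem chi_sq (x : ZMod 2) : chi x ^ 2 = 1 := by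
  revert x
  decide

theorem maiorana_mcfarland_type_is_bent
    (m t : ℕ) (hm : 0 < m) (ht : 0 < t) (htm : t ≤ m)
    (τ : GaloisField 2 m →ₗ[ZMod 2] GaloisField 2 t) (hτ : Function.Surjective τ)
    (π : GaloisField 2 m → GaloisField 2 m) (hπ : Function.Bijective π)
    (h : GaloisField 2 m → GaloisField 2 t) :
    ∀ u : GaloisField 2 t, u ≠ 0 → ∀ a b : GaloisField 2 m,
      (∑ p : GaloisField 2 m × GaloisField 2 m,
          chi (Algebra.trace (ZMod 2) (GaloisField 2 t) (u * (τ (p.1 * π p.2) + h p.2)) +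
               Algebra.trace (ZMod 2) (GaloisField 2 m) (a * p.1) +
               Algebra.trace (ZMod 2) (GaloisField 2 m) (b * p.2))) ^ 2
        = 2 ^ (2 * m) := by
  intro u hu a b
  obtain ⟨y₀, hy₀⟩ := maiorana_mcfarland_type_is_bent_general chiAddChar_ne_one τ hτ hπ h hu a b
  simp only [chiAddChar_apply] at hy₀
  rw [hy₀, mul_pow, chi_sq, mul_one, ← Nat.card_eq_fintype_card, GaloisField.card 2 m hm.ne',
    Nat.cast_pow, Nat.cast_ofNat, ← pow_mul, mul_comm]
end

section
/- Let n ≥ 4 be an integer divisible by 4 and F = GaloisField 2 n. Then the number of x ∈ F with x^(2^(n/2 − 1) + 1) = x^(2^(n−1)) equals 2^(n/2) + 2. (Consequently the Gold-type function x ↦ x^(2^(n/2−1)+1) agrees with the linear map x ↦ x^(2^(n−1)) in exactly 2^(n/2) + 2 points.) -/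
/-!
On a field with `q ^ n` elements, `x ↦ x ^ q ^ (n - 1)` inverts `x ↦ x ^ q`. Raising to the power
`q` therefore turns `x ^ k = x ^ q ^ (n - 1)` into `x ^ (k * q) = x`, whose solutions are `0` and
the roots of unity of order dividing `k * q - 1`; the latter are counted in the cyclic group of
units.

For `q = 2`, `n = 2 * m` and `k = 2 ^ (m - 1) + 1`, the exponent `k * q - 1 = 2 ^ m + 1` divides
`2 ^ n - 1 = (2 ^ m + 1) * (2 ^ m - 1)`.
-/

theorem exponent_ne_zero_of_natCard_eq_pow {α : Type*} [Nontrivial α] {q n : ℕ}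
    (h : Nat.card α = q ^ n) : n ≠ 0 := by
  rintro rfl
  exact not_subsingleton α (Nat.card_eq_one_iff_unique.mp (by simpa using h)).1

section

variable {F : Type*} [Field F] [Finite F]

theorem ncard_pow_succ_eq_self (k : ℕ) :
    {x : F | x ^ (k + 1) = x}.ncard = (Nat.card F - 1).gcd k + 1 := by
  have hset : {x : F | x ^ (k + 1) = x} =
      insert 0 (Units.val '' ((powMonoidHom k : Fˣ →* Fˣ).ker : Set Fˣ)) := by
    ext x
    rcases eq_or_ne x 0 with rfl | hx
    · simp
    · lift x to Fˣ using hx.isUnit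
      simp [Units.val_injective.mem_set_image, pow_succ, Units.ext_iff]
  have hzero : (0 : F) ∉ Units.val '' ((powMonoidHom k : Fˣ →* Fˣ).ker : Set Fˣ) := by simp
  rw [hset, Set.ncard_insert_of_notMem hzero, Set.ncard_image_of_injective _ Units.val_injective,
    ← Nat.card_coe_set_eq, ← Nat.card_units]
  exact congrArg (· + 1) (IsCyclic.card_powMonoidHom_ker Fˣ k)

variable {q n : ℕ}

theorem eq_pow_pow_pred_iff_pow_eq (hF : Nat.card F = q ^ n) {x y : F} :
    y = x ^ q ^ (n - 1) ↔ y ^ q = x := by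
  have hn : n ≠ 0 := exponent_ne_zero_of_natCard_eq_pow hF
  have hpow (z : F) : z ^ q ^ n = z := by
    have := Fintype.ofFinite F
    rw [← hF, Nat.card_eq_fintype_card, FiniteField.pow_card]
  constructor
  · rintro rfl
    rw [← pow_mul, pow_sub_one_mul hn, hpow]
  · rintro rfl
    rw [← pow_mul, mul_pow_sub_one hn, hpow]

theorem ncard_pow_eq_pow_pow_pred (hF : Nat.card F = q ^ n) {k : ℕ} (hk : k ≠ 0) :
    {x : F | x ^ k = x ^ q ^ (n - 1)}.ncard = (q ^ n - 1).gcd (k * q - 1) + 1 := by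
  have hq : q ≠ 0 := by
    rintro rfl
    rw [zero_pow (exponent_ne_zero_of_natCard_eq_pow hF)] at hF
    exact Nat.card_pos.ne' hF
  have hkq : k * q - 1 + 1 = k * q := Nat.sub_one_add_one (mul_ne_zero hk hq)
  simp_rw [eq_pow_pow_pred_iff_pow_eq hF, ← pow_mul]
  rw [← hF, ← ncard_pow_succ_eq_self, hkq]

end

theorem gold_agrees_with_inverse_frobenius_general {F : Type*} [Field F] {n : ℕ}
    (hF : Nat.card F = 2 ^ n) (hn : Even n) :
    {x : F | x ^ (2 ^ (n / 2 - 1) + 1) = x ^ (2 ^ (n - 1))}.ncard = 2 ^ (n / 2) + 2 := by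
  have : Finite F := Nat.finite_of_card_ne_zero (by simp [hF])
  have hn0 : n ≠ 0 := exponent_ne_zero_of_natCard_eq_pow hF
  have hexp : (2 ^ (n / 2 - 1) + 1) * 2 - 1 = 2 ^ (n / 2) + 1 := by
    have := pow_sub_one_mul (show n / 2 ≠ 0 by grind) 2
    omega
  have hdvd : 2 ^ (n / 2) + 1 ∣ 2 ^ n - 1 :=
    ⟨2 ^ (n / 2) - 1, by
      rw [← Nat.sq_sub_sq, one_pow, ← pow_mul, Nat.div_mul_cancel hn.two_dvd]⟩
  rw [ncard_pow_eq_pow_pow_pred hF (Nat.succ_ne_zero _), hexp, Nat.gcd_eq_right hdvd]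

theorem gold_agrees_with_inverse_frobenius
    (n : ℕ) (hn : 4 ≤ n) (hn4 : 4 ∣ n) :
    {x : GaloisField 2 n | x ^ (2 ^ (n / 2 - 1) + 1) = x ^ (2 ^ (n - 1))}.ncard =
      2 ^ (n / 2) + 2 :=
  gold_agrees_with_inverse_frobenius_general (GaloisField.card 2 n (by omega)) (by grind)
end

section
/- Let s, n be positive integers and H₁, H₂ : Matrix (Fin s) (Fin (n+1)) (ZMod 2) matrices of rank n+1 whose last columns are the all-ones vector (H₁ i (Fin.last n) = 1 = H₂ i (Fin.last n) for all i). Let σ be a permutation of Fin s with permutation matrix P_σ. If the column space of P_σᵀ · H₁ equals the column space of H₂ (as subspaces of Fin s → ZMod 2), then there exists a matrix B : Matrix (Fin (n+1)) (Fin (n+1)) (ZMod 2) such that P_σᵀ · H₁ · B = H₂, B i (Fin.last n) = 0 for every i < n, and B (Fin.last n) (Fin.last n) = 1 (i.e. B has block shape [[A, 0],[b, 1]], so it encodes an affine transformation x ↦ xA + b). -/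
open Matrix

/-- The column space of a matrix over `ZMod 2`: the span of its columns. -/
def colSpace {s k : ℕ} (M : Matrix (Fin s) (Fin k) (ZMod 2)) :
    Submodule (ZMod 2) (Fin s → ZMod 2) :=
  Submodule.span (ZMod 2) (Set.range fun j : Fin k => fun i : Fin s => M i j)

/-!
Let `P` be the permutation matrix of `σ`. The columns of `H₂` lie in the column space of `Pᵀ * H₁`,
so `Pᵀ * H₁ * B = H₂` for some `B`. Permuting rows fixes the all-ones vector, so the last columns
of `Pᵀ * H₁` and `H₂` agree, and the last column of `B` may be replaced by the last standard basis
vector.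
-/

section

variable {m k l R : Type*}

theorem exists_mul_eq_iff_span_range_col_le [Fintype k] [CommSemiring R]
    {M : Matrix m k R} {N : Matrix m l R} :
    (∃ B : Matrix k l R, M * B = N) ↔
      Submodule.span R (Set.range N.col) ≤ Submodule.span R (Set.range M.col) := by
  rw [Submodule.span_le, Set.range_subset_iff, ← range_mulVecLin]
  constructor
  · rintro ⟨B, rfl⟩ j
    exact ⟨B.col j, rfl⟩
  · intro h
    choose c hc using h
    exact ⟨of fun i j ↦ c j i, ext fun i j ↦ congrFun (hc j) i⟩

theorem exists_mul_eq_and_col_eq_single [Fintype k] [DecidableEq k] [CommSemiring R]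
    {M : Matrix m k R} {N : Matrix m l R} {j : k} {j' : l} (hcol : M.col j = N.col j')
    (hspan : Submodule.span R (Set.range N.col) ≤ Submodule.span R (Set.range M.col)) :
    ∃ B : Matrix k l R, M * B = N ∧ B.col j' = Pi.single j 1 := by
  classical
  obtain ⟨B, rfl⟩ := exists_mul_eq_iff_span_range_col_le.mpr hspan
  refine ⟨B.updateCol j' (Pi.single j 1), ?_, by ext; simp⟩
  calc M * B.updateCol j' (Pi.single j 1)
      = (M * B).updateCol j' (M.col j) := by rw [mul_updateCol, mulVec_single_one]
    _ = M * B := by rw [hcol]; exact updateCol_eq_self _ _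

variable [Fintype m] [DecidableEq m]

theorem transpose_permMatrix_mul_eq_submatrix [NonAssocSemiring R] (σ : Equiv.Perm m)
    (M : Matrix m k R) : (σ.permMatrix R)ᵀ * M = M.submatrix σ.symm id := by
  rw [transpose_permMatrix, PEquiv.toMatrix_toPEquiv_mul, Equiv.Perm.inv_def]

theorem col_transpose_permMatrix_mul_eq_one [NonAssocSemiring R] (σ : Equiv.Perm m)
    {M : Matrix m k R} {j : k} (hM : M.col j = 1) : ((σ.permMatrix R)ᵀ * M).col j = 1 := by
  rw [transpose_permMatrix_mul_eq_submatrix]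
  exact funext fun i ↦ congrFun hM (σ.symm i)

theorem permutation_inducing_sidon_isomorphism_general [Fintype k] [DecidableEq k]
    [CommSemiring R] {M : Matrix m k R} {N : Matrix m l R} {j : k} {j' : l}
    (hM : M.col j = 1) (hN : N.col j' = 1) (σ : Equiv.Perm m)
    (hspan : Submodule.span R (Set.range N.col) ≤
      Submodule.span R (Set.range ((σ.permMatrix R)ᵀ * M).col)) :
    ∃ B : Matrix k l R, (σ.permMatrix R)ᵀ * M * B = N ∧ B.col j' = Pi.single j 1 :=
  exists_mul_eq_and_col_eq_single
    ((col_transpose_permMatrix_mul_eq_one σ hM).trans hN.symm) hspan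

end

theorem permutation_inducing_sidon_isomorphism
    (s n : ℕ) (hs : 0 < s) (hn : 0 < n)
    (H₁ H₂ : Matrix (Fin s) (Fin (n + 1)) (ZMod 2))
    (hrank1 : Module.finrank (ZMod 2) (colSpace H₁) = n + 1)
    (hrank2 : Module.finrank (ZMod 2) (colSpace H₂) = n + 1)
    (hlast1 : ∀ i, H₁ i (Fin.last n) = 1)
    (hlast2 : ∀ i, H₂ i (Fin.last n) = 1)
    (σ : Equiv.Perm (Fin s))
    (hspan : colSpace ((σ.permMatrix (ZMod 2))ᵀ * H₁) = colSpace H₂) :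
    ∃ B : Matrix (Fin (n + 1)) (Fin (n + 1)) (ZMod 2),
      (σ.permMatrix (ZMod 2))ᵀ * H₁ * B = H₂ ∧
      (∀ i : Fin (n + 1), (i : ℕ) < n → B i (Fin.last n) = 0) ∧
      B (Fin.last n) (Fin.last n) = 1 := by
  obtain ⟨B, hB, hcol⟩ := permutation_inducing_sidon_isomorphism_general
    (funext hlast1) (funext hlast2) σ hspan.ge
  exact ⟨B, hB, fun i hi ↦ (congrFun hcol i).trans (Pi.single_eq_of_ne (Fin.ne_of_lt hi) 1),
    (congrFun hcol _).trans (Pi.single_eq_same _ _)⟩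
end
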